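/- arXiv:1108.2950 — 3 statements merged into one kernel-verified Lean document; each statement's English description precedes it below -/
import Mathlib

section
/- Every 7-regular graph admits a zero-sum 5-flow. -/
open Finset SimpleGraph

lemma tutte_weight {W : Type*} [Fintype W] [DecidableEq W] (H : SimpleGraph W)
    (y : W → W → ℕ) (hy7 : ∀ w, ∑ q, y q w ≤ 7) (hyadj : ∀ q w, y q w ≠ 0 → H.Adj q w)
    (heven : Even (Fintype.card W)) (bad : Finset W → Prop)
    (hbad : ∀ Q1 Q2, bad Q1 → bad Q2 → Disjoint Q1 Q2 → ∃ a ∈ Q1, ∃ b ∈ Q2, H.Adj a b)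
    (hcut : ∀ Q : Finset W, Odd #Q → ¬ bad Q → 7 ≤ ∑ q ∈ Q, ∑ w ∈ Qᶜ, y q w) :
    ∃ M : H.Subgraph, M.IsPerfectMatching := by
  classical
  rw [tutte]
  intro U hU
  unfold IsTutteViolator at hU
  set L := ((⊤ : H.Subgraph).deleteVerts U).coe with hL
  have hpar := odd_ncard_oddComponents L
  have hcard : Nat.card ((⊤ : H.Subgraph).deleteVerts U).verts + U.ncard = Fintype.card W := by
    have h1 : ((⊤ : H.Subgraph).deleteVerts U).verts = Uᶜ := by
      simp [Set.compl_eq_univ_sdiff]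
    rw [h1, Nat.card_coe_set_eq, ← Nat.card_eq_fintype_card, add_comm]
    exact Set.ncard_add_ncard_compl U
  let Q : L.ConnectedComponent → Finset W := fun c => c.supp.toFinset.map (Function.Embedding.subtype _)
  have hQmem : ∀ c w, w ∈ Q c ↔ ∃ h : w ∈ ((⊤ : H.Subgraph).deleteVerts U).verts,
      L.connectedComponentMk ⟨w, h⟩ = c := by
    intro c w
    simp [Q]
  have hQU : ∀ c w, w ∈ Q c → w ∉ U := by
    intro c w h
    obtain ⟨h, -⟩ := (hQmem c w).1 h
    simpa using h
  have hQadj : ∀ c a b, a ∈ Q c → H.Adj a b → b ∉ U → b ∈ Q c := by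
    intro c a b ha hab hb
    obtain ⟨h, hc⟩ := (hQmem c a).1 ha
    have hb' : b ∈ ((⊤ : H.Subgraph).deleteVerts U).verts := by simpa using hb
    refine (hQmem c b).2 ⟨hb', ?_⟩
    rw [← hc, ConnectedComponent.eq]
    refine Adj.reachable ?_
    have haU := hQU c a ha
    simp [hL, hab.symm, hb, haU]
  have hQdisj : ∀ c c' w, w ∈ Q c → w ∈ Q c' → c = c' := by
    intro c c' w h h'
    obtain ⟨h, hc⟩ := (hQmem c w).1 h
    obtain ⟨h', hc'⟩ := (hQmem c' w).1 h'
    rw [← hc, ← hc']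
  have hQcard : ∀ c, #(Q c) = c.supp.ncard := by
    intro c
    simp [Q, Set.ncard_eq_toFinset_card']
  let O : Finset L.ConnectedComponent := {c | Odd #(Q c)}
  have hO : L.oddComponents.ncard = #O := by
    rw [← Set.ncard_coe_finset]
    congr 1
    ext c
    simp [O, hQcard]
  let B := O.filter (fun c => bad (Q c))
  let B' := O.filter (fun c => ¬ bad (Q c))
  have hBB : #B + #B' = #O := card_filter_add_card_filter_not _
  have hB : #B ≤ 1 := by
    rw [card_le_one]
    intro c hc c' hc'
    by_contra hne
    obtain ⟨a, ha, b, hb, hab⟩ := hbad (Q c) (Q c') (mem_filter.1 hc).2 (mem_filter.1 hc').2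
      (by
        rw [Finset.disjoint_left]
        intro w h h'
        exact hne (hQdisj _ _ w h h'))
    exact hne (hQdisj _ _ b (hQadj c a b ha hab (hQU _ _ hb)) hb)
  have h7 : #B' * 7 ≤ #U.toFinset * 7 := by
    calc #B' * 7 = ∑ c ∈ B', 7 := by simp
      _ ≤ ∑ c ∈ B', ∑ q ∈ Q c, ∑ w ∈ (Q c)ᶜ, y q w := by
        apply sum_le_sum
        intro c hc
        simp only [B', O, mem_filter, mem_univ, true_and] at hc
        exact hcut _ hc.1 hc.2
      _ ≤ ∑ c ∈ B', ∑ q ∈ Q c, ∑ w ∈ U.toFinset, y q w := by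
        refine sum_le_sum fun c hc => sum_le_sum fun q hq => ?_
        refine sum_le_sum_of_ne_zero ?_
        intro w hw hne
        by_contra hwU
        exact (mem_compl.1 hw) (hQadj c q w hq (hyadj _ _ hne) (by simpa using hwU))
      _ = ∑ q ∈ B'.biUnion Q, ∑ w ∈ U.toFinset, y q w := by
        rw [sum_biUnion]
        intro c _ c' _ hne
        simp only [Function.onFun]
        rw [Finset.disjoint_left]
        intro w h h'
        exact hne (hQdisj _ _ w h h')
      _ ≤ ∑ q, ∑ w ∈ U.toFinset, y q w := sum_le_sum_of_subset (subset_univ _)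
      _ = ∑ w ∈ U.toFinset, ∑ q, y q w := sum_comm
      _ ≤ ∑ w ∈ U.toFinset, 7 := sum_le_sum fun w _ => hy7 w
      _ = _ := by simp
  have hUc : U.ncard = #U.toFinset := Set.ncard_eq_toFinset_card' U
  rw [hO] at hU hpar
  have : #O = U.ncard + 1 := by omega
  rw [this] at hpar
  rw [← hcard] at heven
  grind

def hw {V D : Type*} [DecidableEq V] [DecidableEq D] (src : D → V) (inv : D → D) :
    D ⊕ V × Fin 3 → D ⊕ V × Fin 3 → ℕ
  | .inl d, .inl e => if e = inv d ∧ inv d ≠ d then 4 else 0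
  | .inl d, .inr x => if src d = x.1 then 1 else 0
  | .inr x, .inl d => if src d = x.1 then 1 else 0
  | .inr _, .inr _ => 0

def hadj {V D : Type*} (src : D → V) (inv : D → D) :
    D ⊕ V × Fin 3 → D ⊕ V × Fin 3 → Prop
  | .inl d, .inl e => d ≠ e ∧ (e = inv d ∨ d = inv e ∨ (inv d = d ∧ inv e = e))
  | .inl d, .inr x => src d = x.1
  | .inr x, .inl d => src d = x.1
  | .inr _, .inr _ => False

lemma cut_ge {W ι : Type*} [Fintype W] [DecidableEq W] [Fintype ι] [DecidableEq ι]
    (y : W → W → ℕ) (Q : Finset W)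
    (g : ι → W × W) (hg : Function.Injective g) (h1 : ∀ i, (g i).1 ∈ Q) (h2 : ∀ i, (g i).2 ∉ Q) :
    ∑ i, y (g i).1 (g i).2 ≤ ∑ q ∈ Q, ∑ w ∈ Qᶜ, y q w := by
  rw [← sum_product']
  calc ∑ i, y (g i).1 (g i).2 = ∑ p ∈ univ.image g, y p.1 p.2 := by
        rw [sum_image]
        exact fun a _ b _ h => hg h
    _ ≤ _ := by
        apply sum_le_sum_of_subset
        intro p hp
        simp only [mem_image, mem_univ, true_and] at hp
        obtain ⟨i, rfl⟩ := hp
        simp [h1 i, h2 i]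

lemma half_cut {V D : Type*} [Fintype V] [DecidableEq V] [Fintype D] [DecidableEq D]
    (src : D → V) (inv : D → D) (hinv : ∀ d, inv (inv d) = d)
    (h7 : ∀ v, #{d | src d = v} = 7)
    (hcut : ∀ K : Finset V, K ≠ univ →
      #{d | src d ∈ K ∧ (inv d = d ∨ src (inv d) ∉ K)} ≠ 1)
    (Q : Finset (D ⊕ V × Fin 3)) (hodd : Odd #Q)
    (hb1 : ∀ d, inv d = d → .inl d ∉ Q)
    (hb2 : Nonempty V → ∃ x, .inr x ∉ Q) :
    7 ≤ ∑ q ∈ Q, ∑ w ∈ Qᶜ, hw src inv q w := by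
  classical
  by_cases hA : ∃ v i j, .inr (v, i) ∈ Q ∧ .inr (v, j) ∉ Q
  · obtain ⟨v, i, j, hi, hj⟩ := hA
    have := cut_ge (hw src inv) Q (ι := {d // src d = v})
      (fun d => if .inl d.1 ∈ Q then (.inl d.1, .inr (v, j)) else (.inr (v, i), .inl d.1))
      (by
        intro a b hab
        apply Subtype.ext
        by_cases ha : Sum.inl a.1 ∈ Q <;> by_cases hb : Sum.inl b.1 ∈ Q <;> simp_all)
      (by intro d; split_ifs <;> assumption)
      (by intro d; split_ifs <;> assumption)
    refine le_trans ?_ this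
    rw [← h7 v, ← Fintype.card_subtype, ← Finset.card_univ, card_eq_sum_ones]
    apply sum_le_sum
    intro d _
    have := d.2
    split_ifs <;> simp [hw, this]
  push Not at hA
  let κ : V → Prop := fun v => .inr (v, 0) ∈ Q
  have hκ : ∀ v i, .inr (v, i) ∈ Q ↔ κ v := fun v i => ⟨fun h => hA v i 0 h, fun h => hA v 0 i h⟩
  let x : D → Prop := fun d => .inl d ∈ Q
  let F : Finset D := {d | ¬ (x d ↔ κ (src d))}
  have h3 : 3 * #F ≤ ∑ q ∈ Q, ∑ w ∈ Qᶜ, hw src inv q w := by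
    have := cut_ge (hw src inv) Q (ι := {d // d ∈ F} × Fin 3)
      (fun d => if .inl d.1.1 ∈ Q then (.inl d.1.1, .inr (src d.1.1, d.2))
        else (.inr (src d.1.1, d.2), .inl d.1.1))
      (by
        rintro ⟨⟨a, ha'⟩, i⟩ ⟨⟨b, hb'⟩, j⟩ hab
        by_cases ha : Sum.inl a ∈ Q <;> by_cases hb : Sum.inl b ∈ Q <;> simp_all)
      (by
        rintro ⟨⟨a, ha'⟩, i⟩
        simp only [F, mem_filter, mem_univ, true_and, x] at ha'
        have := hκ (src a) i
        dsimp only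
        split_ifs <;> grind)
      (by
        rintro ⟨⟨a, ha'⟩, i⟩
        simp only [F, mem_filter, mem_univ, true_and, x] at ha'
        have := hκ (src a) i
        dsimp only
        split_ifs <;> grind)
    refine le_trans ?_ this
    have hc : 3 * #F = Fintype.card ({d // d ∈ F} × Fin 3) := by
      simp [mul_comm]
    rw [hc, ← Finset.card_univ, card_eq_sum_ones]
    apply sum_le_sum
    intro d _
    split_ifs <;> simp [hw]
  let K : Finset V := {v | κ v}
  have hFodd : Odd #F := by
    have e1 : #Q = #{d | x d} + 3 * #K := by
      have : Q = ({d | x d} : Finset D).disjSum (K ×ˢ (univ : Finset (Fin 3))) := by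
        ext w
        rcases w with d | ⟨v, i⟩
        · simp [x]
        · simp [K, hκ]
      conv_lhs => rw [this]
      simp [card_disjSum, mul_comm]
    have e2 : #{d | κ (src d)} = 7 * #K := by
      have := card_eq_sum_card_fiberwise (f := src) (s := {d | κ (src d)}) (t := K)
        (by intro d hd; simpa [K] using hd)
      rw [this]
      have h : ∀ v ∈ K, #{d ∈ ({d | κ (src d)} : Finset D) | src d = v} = 7 := by
        intro v hv
        rw [← h7 v]
        congr 1
        ext d
        simp only [mem_filter, mem_univ, true_and, K] at hv ⊢
        constructor
        · exact fun h => h.2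
        · intro h; subst h; exact ⟨hv, rfl⟩
      rw [sum_congr rfl h]
      simp [mul_comm]
    have e3 : #F + 2 * #{d | x d ∧ κ (src d)} = #{d | x d} + #{d | κ (src d)} := by
      have a1 := card_union_add_card_inter ({d | x d} : Finset D) ({d | κ (src d)} : Finset D)
      have a2 : ({d | x d} : Finset D) ∩ ({d | κ (src d)} : Finset D) = ({d | x d ∧ κ (src d)} : Finset D) := by
        ext d; simp
      have a3 : ({d | x d} : Finset D) ∪ ({d | κ (src d)} : Finset D) = F.disjUnion ({d | x d ∧ κ (src d)} : Finset D)
          (by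
            rw [Finset.disjoint_left]; intro d h1 h2
            simp only [F, mem_filter, mem_univ, true_and] at h1 h2; tauto) := by
        ext d
        simp only [F, mem_union, mem_disjUnion, mem_filter, mem_univ, true_and]; tauto
      rw [a2, a3, card_disjUnion] at a1
      omega
    rw [Nat.odd_iff] at *
    omega
  by_cases hF3 : 3 ≤ #F
  · omega
  have hF1 : #F = 1 := by
    rw [Nat.odd_iff] at hFodd
    omega
  obtain ⟨d0, hd0⟩ := card_eq_one.1 hF1
  have hF : ∀ d, ¬ (x d ↔ κ (src d)) ↔ d = d0 := by
    intro d
    have : d ∈ F ↔ d = d0 := by rw [hd0, mem_singleton]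
    simpa [F] using this
  by_cases hE : ∃ e, x e ∧ ¬ x (inv e)
  · obtain ⟨e, he1, he2⟩ := hE
    have hne : inv e ≠ e := by intro h; rw [h] at he2; exact he2 he1
    have hd := (hF d0).2 rfl
    have := cut_ge (hw src inv) Q (ι := Option (Fin 3))
      (fun o => match o with
        | none => (.inl e, .inl (inv e))
        | some i => if .inl d0 ∈ Q then (.inl d0, .inr (src d0, i))
          else (.inr (src d0, i), .inl d0))
      (by
        rintro (_ | i) (_ | j) hab <;> by_cases ha : Sum.inl d0 ∈ Q <;> simp_all)
      (by
        rintro (_ | i)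
        · exact he1
        · have := hκ (src d0) i
          dsimp only
          split_ifs <;> grind)
      (by
        rintro (_ | i)
        · exact he2
        · have := hκ (src d0) i
          dsimp only
          split_ifs <;> grind)
    refine le_trans ?_ this
    rw [Fintype.sum_option, Fin.sum_univ_three]
    dsimp only
    split_ifs <;> simp [hw, hne]
  push Not at hE
  exfalso
  have hs : ∃ e, ({d | src d ∈ K ∧ (inv d = d ∨ src (inv d) ∉ K)} : Finset D) = {e} := by
    have hK : ∀ v, v ∈ K ↔ κ v := by intro v; simp [K]
    have hx : ∀ d, inv d = d → ¬ x d := hb1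
    by_cases hk : κ (src d0)
    · refine ⟨d0, ?_⟩
      ext e
      simp only [mem_filter, mem_univ, true_and, mem_singleton, hK]
      have := hF e; have := hF d0; have := hF (inv d0); have := hF (inv e)
      have := hE e; have := hE d0; have := hE (inv d0); have := hinv d0; have := hinv e
      have := hx e; have := hx d0
      grind
    · refine ⟨inv d0, ?_⟩
      ext e
      simp only [mem_filter, mem_univ, true_and, mem_singleton, hK]
      have := hF e; have := hF d0; have := hF (inv d0); have := hF (inv e)
      have := hE e; have := hE d0; have := hE (inv d0); have := hinv d0; have := hinv e
      have := hx e; have := hx d0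
      grind
  refine hcut K ?_ (card_eq_one.2 hs)
  intro hu
  obtain ⟨⟨v, i⟩, hv⟩ := hb2 ⟨src d0⟩
  apply hv
  rw [hκ]
  have : v ∈ K := by rw [hu]; exact mem_univ _
  simpa [K] using this

lemma half_factor {V D : Type*} [Fintype V] [DecidableEq V] [Fintype D] [DecidableEq D]
    (src : D → V) (inv : D → D) (hinv : ∀ d, inv (inv d) = d)
    (h7 : ∀ v, #{d | src d = v} = 7)
    (hcut : ∀ K : Finset V, K ≠ univ →
      #{d | src d ∈ K ∧ (inv d = d ∨ src (inv d) ∉ K)} ≠ 1) :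
    ∃ Δ : Finset D, (∀ d ∈ Δ, inv d ∈ Δ) ∧ ∀ v, #{d ∈ Δ | src d = v} = 3 := by
  classical
  let H : SimpleGraph (D ⊕ V × Fin 3) :=
    { Adj := hadj src inv
      symm := ⟨by
        rintro (d | x) (e | z) h <;> simp only [hadj] at h ⊢ <;> first | exact h | skip
        exact ⟨h.1.symm, by tauto⟩⟩
      loopless := ⟨by rintro (d | x) h <;> simp [hadj] at h⟩ }
  have hcD : Fintype.card D = 7 * Fintype.card V := by
    rw [← Finset.card_univ, card_eq_sum_card_fiberwise (f := src) (t := univ) (by simp)]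
    simp [h7, mul_comm]
  obtain ⟨M, hM⟩ := tutte_weight H (hw src inv)
    (by
      rintro (e | ⟨v, i⟩)
      · rw [Fintype.sum_sum_type, Fintype.sum_prod_type]
        simp only [hw]
        have a1 : ∑ d, (if e = inv d ∧ inv d ≠ d then 4 else 0) ≤ 4 := by
          calc _ ≤ ∑ d, (if d = inv e then 4 else 0) := by
                apply sum_le_sum
                intro d _
                have := hinv d
                split_ifs <;> grind
            _ = 4 := by simp
        have a2 : ∑ v, ∑ _i : Fin 3, (if src e = v then 1 else 0) = 3 := by
          simp
        omega
      · rw [Fintype.sum_sum_type]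
        simp only [hw]
        rw [← card_filter, h7 v]
        simp)
    (by
      rintro (d | x) (e | z) h <;> simp only [hw, H, hadj] at h ⊢ <;> grind)
    (by
      simp [hcD, Nat.even_iff]; omega)
    (fun Q => (∃ d, inv d = d ∧ .inl d ∈ Q) ∨ (Nonempty V ∧ ∀ x, .inr x ∈ Q))
    (by
      rintro Q1 Q2 (⟨d, hd, hdQ⟩ | ⟨⟨v⟩, h⟩) (⟨e, he, heQ⟩ | ⟨⟨w⟩, h'⟩) hdis
      · refine ⟨_, hdQ, _, heQ, ?_⟩
        simp only [H, hadj]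
        refine ⟨?_, by tauto⟩
        rintro rfl
        exact Finset.disjoint_left.1 hdis hdQ heQ
      · exact ⟨_, hdQ, _, h' (src d, 0), by simp [H, hadj]⟩
      · exact ⟨_, h (src e, 0), _, heQ, by simp [H, hadj]⟩
      · exact absurd (h' (v, 0)) (Finset.disjoint_left.1 hdis (h (v, 0))))
    (by
      intro Q hodd hbad
      push Not at hbad
      exact half_cut src inv hinv h7 hcut Q hodd hbad.1 hbad.2)
  rw [Subgraph.isPerfectMatching_iff] at hM
  have hMadj : ∀ a b, M.Adj a b → hadj src inv a b := fun a b h => M.adj_sub h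
  refine ⟨({d | ∃ x, M.Adj (.inl d) (.inr x)} : Finset D), ?_, ?_⟩
  · intro d hd
    simp only [mem_filter, mem_univ, true_and] at hd ⊢
    obtain ⟨x, hx⟩ := hd
    by_cases hf : inv d = d
    · rw [hf]; exact ⟨x, hx⟩
    obtain ⟨w, hw, -⟩ := hM (.inl (inv d))
    rcases w with e | z
    · exfalso
      have h1 := hMadj _ _ hw
      simp only [hadj] at h1
      have h2 := hinv d
      have h3 := hinv e
      have : e = d := by grind
      subst this
      have := (hM (.inl e)).unique hx hw.symm
      cases this
    · exact ⟨z, hw⟩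
  · intro v
    have hex : ∀ i : Fin 3, ∃ d, M.Adj (.inl d) (.inr (v, i)) ∧ src d = v := by
      intro i
      obtain ⟨w, hw, -⟩ := hM (.inr (v, i))
      have h1 := hMadj _ _ hw
      rcases w with e | z
      · exact ⟨e, hw.symm, h1⟩
      · exact h1.elim
    choose g hg hgs using hex
    have hginj : Function.Injective g := by
      intro i j hij
      have h1 := hg i
      have h2 := hg j
      rw [hij] at h1
      have := (hM _).unique h1 h2
      simpa using this
    have : ({d ∈ ({d | ∃ x, M.Adj (.inl d) (.inr x)} : Finset D) | src d = v}) = univ.image g := by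
      ext d
      simp only [mem_filter, mem_univ, true_and, mem_image]
      constructor
      · rintro ⟨⟨⟨u, i⟩, hx⟩, hd⟩
        have h1 := hMadj _ _ hx
        simp only [hadj] at h1
        subst hd
        subst h1
        refine ⟨i, ?_⟩
        have := (hM _).unique (hg i).symm hx.symm
        simpa using this
      · rintro ⟨i, rfl⟩
        exact ⟨⟨_, hg i⟩, hgs i⟩
    rw [this, card_image_of_injective _ hginj]
    simp

lemma even_of_swap {V : Type*} [DecidableEq V] (s : Finset (V × V))
    (h : ∀ p ∈ s, p.swap ∈ s) (hd : ∀ p ∈ s, p.1 ≠ p.2) : Even #s := by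
  rw [← ZMod.natCast_eq_zero_iff_even, card_eq_sum_ones, Nat.cast_sum]
  refine sum_involution (fun p _ => p.swap) ?_ ?_ ?_ ?_
  · intro p hp; decide
  · intro p hp _ he
    apply hd p hp
    have := congrArg Prod.fst he
    exact this.symm
  · intro p hp; exact h p hp
  · intro p hp; simp

open Classical in
noncomputable def cutD {V : Type*} [Fintype V] (G : SimpleGraph V) (K : Finset V) : ℕ :=
  #{p : V × V | G.Adj p.1 p.2 ∧ p.1 ∈ K ∧ p.2 ∉ K}

open Classical in
lemma card_pairs {V : Type*} [Fintype V] (R : Finset V) (r : V → V → Prop) (k : ℕ)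
    (h : ∀ u ∈ R, #{v | r u v} = k) : #{p : V × V | p.1 ∈ R ∧ r p.1 p.2} = k * #R := by
  rw [card_eq_sum_card_fiberwise (f := Prod.fst) (t := R) (by intro p hp; simp at hp; simp [hp.1])]
  have : ∀ u ∈ R, #{p ∈ ({p : V × V | p.1 ∈ R ∧ r p.1 p.2} : Finset (V × V)) | p.1 = u} = k := by
    intro u hu
    rw [← h u hu]
    symm
    apply card_bij (fun v _ => (u, v))
    · intro v hv; simpa [hu] using hv
    · intro a _ b _ hab; simpa using hab
    · rintro ⟨a, b⟩ hab
      simp only [mem_filter, mem_univ, true_and] at hab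
      obtain ⟨⟨h1, h2⟩, rfl⟩ := hab
      exact ⟨b, by simpa using h2, rfl⟩
  rw [sum_congr rfl this]
  simp [mul_comm]

open Classical in
lemma region {V : Type*} [Fintype V] (G : SimpleGraph V)
    (hreg : ∀ u, #{v | G.Adj u v} = 7) (R : Finset V)
    (hR : ∀ K ⊆ R, K ≠ R → cutD G K ≠ 1) :
    ∃ Δ : V → V → Prop, (∀ u v, Δ u v → G.Adj u v) ∧ (∀ u ∈ R, ∀ v ∈ R, Δ u v → Δ v u) ∧
      (∀ u ∈ R, #{v | Δ u v} = 3) ∧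
      (cutD G R = 1 → ∀ u ∈ R, ∀ v ∉ R, G.Adj u v → Δ u v) := by
  let D := {p : V × V // G.Adj p.1 p.2 ∧ p.1 ∈ R}
  let src : D → {v // v ∈ R} := fun p => ⟨p.1.1, p.2.2⟩
  let inv : D → D := fun p => if h : p.1.2 ∈ R then ⟨p.1.swap, p.2.1.symm, h⟩ else p
  have inv1 : ∀ p : D, p.1.2 ∈ R → (inv p).1 = p.1.swap := by
    intro p h; simp [inv, h]
  have inv2 : ∀ p : D, p.1.2 ∉ R → inv p = p := by
    intro p h; simp [inv, h]
  have inv3 : ∀ p : D, inv p = p ↔ p.1.2 ∉ R := by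
    intro p
    refine ⟨fun h h' => ?_, inv2 p⟩
    have := inv1 p h'
    rw [h] at this
    have h2 := congrArg Prod.fst this
    exact p.2.1.ne h2
  have hinv : ∀ d, inv (inv d) = d := by
    intro p
    by_cases h : p.1.2 ∈ R
    · apply Subtype.ext
      have h1 := inv1 p h
      rw [inv1 (inv p) (by rw [h1]; exact p.2.2), h1]
      simp
    · rw [inv2 p h, inv2 p h]
  obtain ⟨Δ, hΔ1, hΔ2⟩ := half_factor src inv hinv
    (by
      rintro ⟨u, hu⟩
      rw [← hreg u]
      apply card_bij (fun p _ => p.1.2)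
      · intro p hp
        simp only [mem_filter, mem_univ, true_and, src, Subtype.mk.injEq] at hp ⊢
        rw [← hp]; exact p.2.1
      · intro p hp q hq h
        simp only [mem_filter, mem_univ, true_and, src, Subtype.mk.injEq] at hp hq
        exact Subtype.ext (Prod.ext (hp.trans hq.symm) h)
      · intro v hv
        simp only [mem_filter, mem_univ, true_and] at hv
        exact ⟨⟨(u, v), hv, hu⟩, by simp [src], rfl⟩)
    (by
      intro K hK hc
      refine hR (K.map (Function.Embedding.subtype _)) ?_ ?_ ?_
      · intro v hv
        simp only [mem_map, Function.Embedding.coe_subtype] at hv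
        obtain ⟨a, -, rfl⟩ := hv
        exact a.2
      · intro h
        apply hK
        ext ⟨v, hv⟩
        have : v ∈ K.map (Function.Embedding.subtype _) := by rw [h]; exact hv
        simpa [hv] using this
      · rw [← hc]
        unfold cutD
        symm
        apply card_bij (fun p _ => p.1)
        · intro p hp
          simp only [mem_filter, mem_univ, true_and] at hp
          simp only [mem_filter, mem_univ, true_and, mem_map, Function.Embedding.coe_subtype]
          refine ⟨p.2.1, ⟨_, hp.1, rfl⟩, ?_⟩
          rintro ⟨a, ha, hap⟩
          rcases hp.2 with h | h
          · rw [inv3] at h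
            rw [← hap] at h
            exact h a.2
          · apply h
            have h1 := inv1 p (by rw [← hap]; exact a.2)
            have : src (inv p) = a := by
              apply Subtype.ext
              simp only [src, h1]
              exact hap.symm
            rwa [this]
        · intro p _ q _ h; exact Subtype.ext h
        · rintro ⟨u, v⟩ hp
          simp only [mem_filter, mem_univ, true_and, mem_map, Function.Embedding.coe_subtype] at hp
          obtain ⟨h1, ⟨a, ha, rfl⟩, h3⟩ := hp
          refine ⟨⟨(a.1, v), h1, a.2⟩, ?_, rfl⟩
          simp only [mem_filter, mem_univ, true_and]
          refine ⟨ha, ?_⟩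
          by_cases hv : v ∈ R
          · right
            intro h
            apply h3
            refine ⟨_, h, ?_⟩
            simp only [src]
            rw [inv1 _ hv]
            rfl
          · left
            exact inv2 _ hv)
  obtain ⟨P, hP⟩ : ∃ P : V → V → Prop, ∀ u v, P u v ↔
      ∃ h : G.Adj u v ∧ u ∈ R, (⟨(u, v), h⟩ : D) ∈ Δ := ⟨_, fun _ _ => Iff.rfl⟩
  have key : ∀ u ∈ R, #{v | P u v} = 3 := by
    intro u hu
    rw [← hΔ2 ⟨u, hu⟩]
    symm
    apply card_bij (fun p _ => p.1.2)
    · intro p hp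
      simp only [mem_filter, mem_univ, true_and, src, Subtype.mk.injEq] at hp ⊢
      obtain ⟨hp, rfl⟩ := hp
      exact (hP _ _).2 ⟨p.2, hp⟩
    · intro p hp q hq h
      simp only [mem_filter, src, Subtype.mk.injEq] at hp hq
      exact Subtype.ext (Prod.ext (hp.2.trans hq.2.symm) h)
    · intro v hv
      simp only [mem_filter, mem_univ, true_and] at hv
      obtain ⟨h, hv⟩ := (hP _ _).1 hv
      exact ⟨⟨(u, v), h⟩, by simp [src, hv], rfl⟩
  have hsym : ∀ u ∈ R, ∀ v ∈ R, P u v →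
      P v u := by
    intro u hu v hv hh
    obtain ⟨h, hd⟩ := (hP _ _).1 hh
    refine (hP _ _).2 ⟨⟨h.1.symm, hv⟩, ?_⟩
    have := hΔ1 _ hd
    convert this using 1
    apply Subtype.ext
    rw [inv1 _ hv]
    rfl
  refine ⟨P, ?_, hsym, key, ?_⟩
  · intro u v h; exact ((hP _ _).1 h).1.1
  · intro hc u0 hu0 v0 hv0 hadj
    unfold cutD at hc
    rw [card_eq_one] at hc
    obtain ⟨p0, hp0⟩ := hc
    have huniq : ∀ u ∈ R, ∀ v ∉ R, G.Adj u v → u = u0 ∧ v = v0 := by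
      intro u hu v hv huv
      have a1 : (u, v) ∈ ({p0} : Finset (V × V)) := by rw [← hp0]; simp [hu, hv, huv]
      have a2 : (u0, v0) ∈ ({p0} : Finset (V × V)) := by rw [← hp0]; simp [hu0, hv0, hadj]
      rw [mem_singleton] at a1 a2
      rw [← a2] at a1
      simpa using a1
    by_contra hno
    have e1 := card_pairs R _ 3 key
    have e2 := card_pairs R G.Adj 7 (fun u _ => hreg u)
    have e3 : Even #{p : V × V | p.1 ∈ R ∧ P p.1 p.2} := by
      have hin : ∀ u v, P u v → v ∈ R := by
        intro u v h
        by_contra hv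
        obtain ⟨rfl, rfl⟩ := huniq u ((hP _ _).1 h).1.2 v hv ((hP _ _).1 h).1.1
        exact hno h
      apply even_of_swap
      · rintro ⟨u, v⟩ hp
        simp only [mem_filter, mem_univ, true_and] at hp
        have := hsym u hp.1 v (hin _ _ hp.2) hp.2
        simp only [mem_filter, mem_univ, true_and]
        exact ⟨hin _ _ hp.2, this⟩
      · rintro ⟨u, v⟩ hp
        simp only [mem_filter, mem_univ, true_and] at hp
        exact ((hP _ _).1 hp.2).1.1.ne
    have e4 : Even #(({p : V × V | p.1 ∈ R ∧ G.Adj p.1 p.2} : Finset (V × V)).erase (u0, v0)) := by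
      apply even_of_swap
      · rintro ⟨u, v⟩ hp
        simp only [mem_filter, mem_univ, true_and, mem_erase, Prod.swap_prod_mk, ne_eq, Prod.mk.injEq] at hp ⊢
        have hvR : v ∈ R := by
          by_contra hv
          exact hp.1 (huniq u hp.2.1 v hv hp.2.2)
        refine ⟨?_, hvR, hp.2.2.symm⟩
        rintro ⟨rfl, rfl⟩
        exact hv0 hp.2.1
      · rintro ⟨u, v⟩ hp
        simp only [mem_filter, mem_univ, true_and, mem_erase] at hp
        exact hp.2.2.ne
    rw [card_erase_of_mem (by simp [hu0, hadj]), e2] at e4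
    rw [e1] at e3
    have : 0 < #R := card_pos.2 ⟨u0, hu0⟩
    rw [Nat.even_iff] at e3 e4
    omega

lemma cut_partition {V : Type*} [Fintype V] (G : SimpleGraph V) :
    ∃ (reg : V → Finset V) (core : Finset V), (∀ v, v ∈ reg v) ∧
      (∀ v w, w ∈ reg v → reg w = reg v) ∧
      (∀ v K, K ⊆ reg v → K ≠ reg v → cutD G K ≠ 1) ∧
      (∀ v, reg v = core ∨ cutD G (reg v) = 1) := by
  classical
  let leaf : Finset V → Prop := fun C => cutD G C = 1 ∧ ∀ K ⊆ C, K ≠ C → cutD G K ≠ 1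
  let good : Finset (Finset (Finset V)) :=
    {L | (∀ C ∈ L, leaf C) ∧ ∀ C ∈ L, ∀ C' ∈ L, ∀ v, v ∈ C → v ∈ C' → C = C'}
  obtain ⟨L, hL, hmax⟩ := good.exists_max_image card ⟨∅, by simp [good]⟩
  simp only [good, mem_filter, mem_univ, true_and] at hL hmax
  obtain ⟨hL1, hL2⟩ := hL
  let core : Finset V := {v | ∀ C ∈ L, v ∉ C}
  have hcore : ∀ K ⊆ core, cutD G K ≠ 1 := by
    intro K hK hc
    obtain ⟨K', hK', hmin⟩ := ({K' ∈ K.powerset | cutD G K' = 1} : Finset (Finset V)).exists_min_image card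
      ⟨K, by simp [hc]⟩
    simp only [mem_filter, mem_powerset] at hK' hmin
    have hleaf : leaf K' := by
      refine ⟨hK'.2, fun J hJ hne hJ1 => ?_⟩
      have h1 := hmin J ⟨hJ.trans hK'.1, hJ1⟩
      exact hne (eq_of_subset_of_card_le hJ h1)
    have hdis : ∀ C ∈ L, ∀ v ∈ K', v ∉ C := by
      intro C hC v hv
      have := hK (hK'.1 hv)
      simp only [core, mem_filter, mem_univ, true_and] at this
      exact this C hC
    have hne : K'.Nonempty := by
      rw [nonempty_iff_ne_empty]
      rintro rfl
      simp [cutD] at hK'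
    obtain ⟨v0, hv0⟩ := hne
    have hnot : K' ∉ L := fun h => hdis K' h v0 hv0 hv0
    have := hmax (insert K' L) (by
      constructor
      · intro C hC
        rcases mem_insert.1 hC with rfl | hC
        · exact hleaf
        · exact hL1 C hC
      · intro C hC C' hC' v hv hv'
        rcases mem_insert.1 hC with h1 | h1 <;> rcases mem_insert.1 hC' with h2 | h2
        · rw [h1, h2]
        · rw [h1] at hv
          exact absurd hv' (hdis _ h2 v hv)
        · rw [h2] at hv'
          exact absurd hv (hdis _ h1 v hv')
        · exact hL2 C h1 C' h2 v hv hv')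
    rw [card_insert_of_notMem hnot] at this
    omega
  have hex : ∀ v, ∃ R : Finset V, v ∈ R ∧ (R ∈ L ∨ (R = core ∧ v ∈ core)) := by
    intro v
    by_cases h : v ∈ core
    · exact ⟨core, h, Or.inr ⟨rfl, h⟩⟩
    · simp only [core, mem_filter, mem_univ, true_and] at h
      push Not at h
      obtain ⟨C, hC, hv⟩ := h
      exact ⟨C, hv, Or.inl hC⟩
  choose reg h1 h2 using hex
  have hco : ∀ v ∈ core, ∀ C ∈ L, v ∉ C := by
    intro v hv
    simpa [core] using hv
  refine ⟨reg, core, h1, ?_, ?_, ?_⟩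
  · intro v w hw
    rcases h2 v with hv | ⟨hv, hv'⟩ <;> rcases h2 w with hw' | ⟨hw', hw''⟩
    · exact hL2 _ hw' _ hv w (h1 w) hw
    · exact absurd hw (hco w hw'' _ hv)
    · rw [hv] at hw
      exact absurd (h1 w) (hco w hw _ hw')
    · rw [hv, hw']
  · intro v K hK hne
    rcases h2 v with hv | ⟨hv, hv'⟩
    · exact (hL1 _ hv).2 K hK hne
    · rw [hv] at hK; exact hcore K hK
  · intro v
    rcases h2 v with hv | ⟨hv, hv'⟩
    · exact Or.inr (hL1 _ hv).1
    · exact Or.inl hv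

open Classical in
lemma kano {V : Type*} [Fintype V] (G : SimpleGraph V)
    (hreg : ∀ u, #{v | G.Adj u v} = 7) :
    ∃ (typ : V → Prop) (N : V → V → Prop), (∀ u v, N u v → G.Adj u v) ∧
      (∀ u v, N u v → N v u) ∧ (∀ u v, N u v → (typ u ↔ typ v)) ∧
      (∀ u, #{v | N u v} = if typ u then 4 else 3) := by
  obtain ⟨reg, core, hmem, heq, hmin, hor⟩ := cut_partition G
  choose Δ hΔ1 hΔ2 hΔ3 hΔ4 using fun v => region G hreg (reg v) (hmin v)
  -- make the choice depend on the region only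
  have hex : ∀ R : Finset V, ∃ E : V → V → Prop, (∃ v, reg v = R) → ((∀ u v, E u v → G.Adj u v) ∧
      (∀ u ∈ R, ∀ v ∈ R, E u v → E v u) ∧ (∀ u ∈ R, #{v | E u v} = 3) ∧
      (cutD G R = 1 → ∀ u ∈ R, ∀ v ∉ R, G.Adj u v → E u v)) := by
    intro R
    by_cases h : ∃ v, reg v = R
    · obtain ⟨v, rfl⟩ := h
      exact ⟨Δ v, fun _ => ⟨hΔ1 v, hΔ2 v, hΔ3 v, hΔ4 v⟩⟩
    · exact ⟨fun _ _ => True, fun h' => absurd h' h⟩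
  choose E hE using hex
  obtain ⟨δ, hδ⟩ : ∃ δ : V → V → Prop, ∀ u v, δ u v = E (reg u) u v := ⟨_, fun _ _ => rfl⟩
  have d1 : ∀ u v, δ u v → G.Adj u v := by
    intro u v h; rw [hδ] at h; exact (hE (reg u) ⟨u, rfl⟩).1 _ _ h
  have d2 : ∀ u v, reg u = reg v → δ u v → δ v u := by
    intro u v h h'
    rw [hδ] at h' ⊢
    rw [← h]
    exact (hE (reg u) ⟨u, rfl⟩).2.1 _ (hmem u) _ (h ▸ hmem v) h'
  have d3 : ∀ u, #{v | δ u v} = 3 := by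
    intro u
    rw [← (hE (reg u) ⟨u, rfl⟩).2.2.1 u (hmem u)]
    simp only [hδ]
  have hnm : ∀ u v, reg u ≠ reg v → v ∉ reg u := fun u v h h' => h (heq u v h').symm
  have d4 : ∀ u v, reg u ≠ core → reg u ≠ reg v → G.Adj u v → δ u v := by
    intro u v h h' h''
    rw [hδ]
    exact (hE (reg u) ⟨u, rfl⟩).2.2.2 ((hor u).resolve_left h) _ (hmem u) _ (hnm _ _ h') h''
  have d5 : ∀ u v a b, reg u ≠ core → reg u ≠ reg v → G.Adj u v → a ∈ reg u → b ∉ reg u →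
      G.Adj a b → a = u ∧ b = v := by
    intro u v a b h h' h'' ha hb hab
    have hc := (hor u).resolve_left h
    unfold cutD at hc
    obtain ⟨p0, hp0⟩ := card_eq_one.1 hc
    have a1 : (u, v) ∈ ({p0} : Finset (V × V)) := by
      rw [← hp0]; simp [hmem u, hnm _ _ h', h'']
    have a2 : (a, b) ∈ ({p0} : Finset (V × V)) := by rw [← hp0]; simp [ha, hb, hab]
    rw [mem_singleton] at a1 a2
    rw [← a1] at a2
    simpa using a2
  obtain ⟨typ, ht⟩ : ∃ typ : V → Prop, ∀ u, typ u ↔ (reg u ≠ core ∧ ∃ a b, a ∈ reg u ∧ b ∉ reg u ∧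
      G.Adj a b ∧ reg b = core ∧ ¬ δ b a) := ⟨_, fun _ => Iff.rfl⟩
  have t1 : ∀ u v, reg u = reg v → (typ u ↔ typ v) := by
    intro u v h
    rw [ht, ht, h]
  have t2 : ∀ u v, reg u ≠ core → reg u ≠ reg v → G.Adj u v →
      (typ u ↔ (reg v = core ∧ ¬ δ v u)) := by
    intro u v h h' h''
    rw [ht]
    constructor
    · rintro ⟨-, a, b, ha, hb, hab, h1, h2⟩
      obtain ⟨rfl, rfl⟩ := d5 u v a b h h' h'' ha hb hab
      exact ⟨h1, h2⟩
    · rintro ⟨h1, h2⟩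
      exact ⟨h, u, v, hmem u, hnm _ _ h', h'', h1, h2⟩
  have t3 : ∀ u, reg u = core → ¬ typ u := by
    intro u h h'
    exact ((ht u).1 h').1 h
  obtain ⟨N, hN⟩ : ∃ N : V → V → Prop, ∀ u v, N u v ↔ G.Adj u v ∧ (δ u v ↔ ¬ typ u) :=
    ⟨_, fun _ _ => Iff.rfl⟩
  have main : ∀ u v, N u v → N v u ∧ (typ u ↔ typ v) := by
    intro u v h
    rw [hN] at h ⊢
    obtain ⟨hadj, h⟩ := h
    have hadj' := hadj.symm
    by_cases hr : reg u = reg v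
    · have h1 := t1 u v hr
      have h2 := d2 u v hr
      have h3 := d2 v u hr.symm
      clear * - h hadj' h1 h2 h3
      tauto
    · have hr' : reg v ≠ reg u := fun h => hr h.symm
      by_cases hu : reg u = core <;> by_cases hv : reg v = core
      · exact absurd (hu.trans hv.symm) hr
      · have h1 := d4 v u hv hr' hadj'
        have h2 := t2 v u hv hr' hadj'
        have h3 := t3 u hu
        clear * - h hadj' hu h1 h2 h3
        tauto
      · have h1 := d4 u v hu hr hadj
        have h2 := t2 u v hu hr hadj
        have h3 := t3 v hv
        clear * - h hadj' hv h1 h2 h3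
        tauto
      · have h1 := d4 u v hu hr hadj
        have h2 := t2 u v hu hr hadj
        have h3 := d4 v u hv hr' hadj'
        have h4 := t2 v u hv hr' hadj'
        clear * - h hadj' hu hv h1 h2 h3 h4
        tauto
  refine ⟨typ, N, fun u v h => ((hN u v).1 h).1, fun u v h => (main u v h).1,
    fun u v h => (main u v h).2, ?_⟩
  intro u
  simp only [hN]
  split_ifs with h
  · have e : ({v | G.Adj u v ∧ (δ u v ↔ ¬ typ u)} : Finset V) =
        ({v | G.Adj u v} : Finset V) \ ({v | δ u v} : Finset V) := by
      ext v; simp [h]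
    rw [e, card_sdiff_of_subset, hreg, d3]
    intro v hv
    simp only [mem_filter, mem_univ, true_and] at hv ⊢
    exact d1 _ _ hv
  · rw [← d3 u]
    congr 1
    ext v
    have h1 := d1 u v
    simp only [mem_filter, mem_univ, true_and]
    clear * - h h1
    tauto

open Classical in
lemma perm_exists {V : Type*} [Fintype V] (typ : V → Prop) (N : V → V → Prop)
    (hs : ∀ u v, N u v → N v u) (ht : ∀ u v, N u v → (typ u ↔ typ v))
    (hd : ∀ u, #{v | N u v} = if typ u then 4 else 3) :
    ∃ σ : V → V, Function.Bijective σ ∧ ∀ v, N v (σ v) := by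
  obtain ⟨f, hf, hfN⟩ := (Finset.all_card_le_biUnion_card_iff_exists_injective
    (fun u => ({v | N u v} : Finset V))).1 (by
    intro s
    let w : V → ℚ := fun u => if typ u then 1 / 4 else 1 / 3
    have hw : ∀ u, ∑ v, (if N u v then w u else 0) = 1 := by
      intro u
      rw [← sum_filter, sum_const, hd]
      simp only [w]
      split_ifs <;> norm_num
    have hwp : ∀ u, 0 ≤ w u := by intro u; simp only [w]; split_ifs <;> norm_num
    set T := s.biUnion (fun u => ({v | N u v} : Finset V)) with hT
    have : (#s : ℚ) ≤ #T := by
      calc (#s : ℚ) = ∑ u ∈ s, 1 := by simp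
        _ = ∑ u ∈ s, ∑ v, (if N u v then w u else 0) := sum_congr rfl fun u _ => (hw u).symm
        _ = ∑ u ∈ s, ∑ v ∈ T, (if N u v then w u else 0) := by
          apply sum_congr rfl
          intro u hu
          symm
          apply sum_subset (subset_univ _)
          intro v _ hv
          rw [if_neg]
          intro h
          apply hv
          rw [hT, mem_biUnion]
          exact ⟨u, hu, by simpa using h⟩
        _ = ∑ v ∈ T, ∑ u ∈ s, (if N u v then w u else 0) := sum_comm
        _ ≤ ∑ v ∈ T, ∑ u, (if N v u then w v else 0) := by
          apply sum_le_sum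
          intro v _
          calc ∑ u ∈ s, (if N u v then w u else 0) ≤ ∑ u, (if N u v then w u else 0) := by
                apply sum_le_sum_of_subset_of_nonneg (subset_univ _)
                intro u _ _
                split_ifs
                · exact hwp u
                · exact le_rfl
            _ = _ := by
                apply sum_congr rfl
                intro u _
                by_cases h : N u v
                · rw [if_pos h, if_pos (hs _ _ h)]
                  simp only [w, ht u v h]
                · rw [if_neg h, if_neg (fun h' => h (hs _ _ h'))]
        _ = ∑ v ∈ T, 1 := sum_congr rfl fun u _ => hw u
        _ = #T := by simp
    exact_mod_cast this)
  exact ⟨f, Finite.injective_iff_bijective.1 hf, fun v => by simpa using hfN v⟩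

theorem stmt_2 {V : Type*} [Fintype V] [DecidableEq V] (G : SimpleGraph V)
    [DecidableRel G.Adj] (hreg : G.IsRegularOfDegree 7) :
    ∃ f : Sym2 V → ℤ,
      (∀ e ∈ G.edgeFinset, f e ≠ 0 ∧ (f e).natAbs ≤ 4) ∧
      (∀ v : V, ∑ e ∈ G.incidenceFinset v, f e = 0) := by
  have hreg' : ∀ u, #({v | G.Adj u v} : Finset V) = 7 := by
    intro u
    rw [← hreg u, ← card_neighborFinset_eq_degree, neighborFinset_eq_filter]
  classical
  obtain ⟨typ, N, hNG, hs, ht, hd⟩ := kano G (by convert hreg')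
  obtain ⟨σ, hσ, hσN⟩ := perm_exists typ N hs ht hd
  let F : V → V → ℤ := fun u v =>
    if N u v then - (if typ u then 1 else 2) - (if σ u = v then 1 else 0) - (if σ v = u then 1 else 0)
    else 2
  have hF : ∀ u v, F u v = F v u := by
    intro u v
    by_cases h : N u v
    · have h' := hs _ _ h
      simp only [F, if_pos h, if_pos h', ht u v h]
      ring
    · have h' : ¬ N v u := fun h' => h (hs _ _ h')
      simp only [F, if_neg h, if_neg h']
  refine ⟨Sym2.lift ⟨F, hF⟩, ?_, ?_⟩
  · intro e he
    induction e using Sym2.ind with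
    | _ u v =>
      simp only [Sym2.lift_mk, F]
      split_ifs <;> simp
  · intro v
    have e1 : ∑ e ∈ G.incidenceFinset v, Sym2.lift ⟨F, hF⟩ e = ∑ w ∈ ({w | G.Adj v w} : Finset V), F v w := by
      symm
      apply sum_bij (fun w _ => s(v, w))
      · intro w hw
        simp only [mem_filter, mem_univ, true_and] at hw
        rw [mem_incidenceFinset]
        simpa [incidenceSet] using hw
      · intro a _ b _ hab
        exact Sym2.congr_right.1 hab
      · intro e he
        rw [mem_incidenceFinset] at he
        obtain ⟨h1, h2⟩ := he
        obtain ⟨w, rfl⟩ := Sym2.mem_iff_exists.1 h2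
        exact ⟨w, by simpa using h1, rfl⟩
      · intro w _
        rfl
    rw [e1]
    have e2 : ∀ w, F v w = (if N v w then - (if typ v then 1 else 2) - 2 else 0)
        - (if σ v = w then 1 else 0) - (if σ w = v then 1 else 0) + 2 := by
      intro w
      by_cases h : N v w
      · simp only [F, if_pos h]; ring
      · have h1 : σ v ≠ w := by rintro rfl; exact h (hσN v)
        have h2 : σ w ≠ v := by rintro rfl; exact h (hs _ _ (hσN w))
        simp [F, h, h1, h2]
    simp only [e2]
    rw [sum_add_distrib, sum_sub_distrib, sum_sub_distrib]
    obtain ⟨z, hz⟩ := hσ.2 v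
    have s1 : ∑ w ∈ ({w | G.Adj v w} : Finset V), (if σ v = w then (1 : ℤ) else 0) = 1 := by
      rw [sum_ite_eq, if_pos]
      simpa using hNG _ _ (hσN v)
    have s2 : ∑ w ∈ ({w | G.Adj v w} : Finset V), (if σ w = v then (1 : ℤ) else 0) = 1 := by
      have : ∀ w, σ w = v ↔ z = w := by
        intro w
        rw [← hz, hσ.1.eq_iff, eq_comm]
      simp only [this]
      rw [sum_ite_eq, if_pos]
      simpa [hz] using (hNG _ _ (hσN z)).symm
    have s3 : ∑ w ∈ ({w | G.Adj v w} : Finset V),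
        (if N v w then - (if typ v then (1 : ℤ) else 2) - 2 else 0) =
        (if typ v then 4 else 3) * (- (if typ v then 1 else 2) - 2) := by
      rw [← sum_filter, sum_const, filter_filter]
      have : ({w | G.Adj v w ∧ N v w} : Finset V) = ({w | N v w} : Finset V) := by
        ext w
        have := hNG v w
        simp only [mem_filter, mem_univ, true_and]
        tauto
      rw [this, hd]
      split_ifs <;> norm_num
    rw [s1, s2, s3, sum_const, hreg']
    split_ifs <;> norm_num
end

section
/- For every odd integer r ≥ 9, every r-regular graph admits a zero-sum 5-flow. -/
open Finset SimpleGraph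

/-- Hall: a transversal of a doubly regular set. -/
lemma zs_transversal {A V : Type*} [Fintype V] [DecidableEq V] [DecidableEq A]
    (S : Finset A) (s t : A → V) (d : ℕ) (hd : 0 < d)
    (hs : ∀ v, (S.filter (fun a => s a = v)).card = d)
    (ht : ∀ v, (S.filter (fun a => t a = v)).card = d) :
    ∃ T ⊆ S, (∀ v, (T.filter (fun a => s a = v)).card = 1) ∧
      (∀ v, (T.filter (fun a => t a = v)).card = 1) := by
  have key : ∀ X : Finset V, X.card ≤ (X.biUnion
      (fun v => (S.filter (fun a => s a = v)).image t)).card := by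
    intro X
    set Y := X.biUnion (fun v => (S.filter (fun a => s a = v)).image t) with hY
    have h1 : (S.filter (fun a => s a ∈ X)).card = X.card * d := by
      rw [Finset.card_eq_sum_card_fiberwise (f := s) (t := X)]
      · rw [Finset.sum_congr rfl (g := fun _ => d)]
        · simp
        · intro v hv
          rw [← hs v, Finset.filter_filter]
          congr 1
          ext a; simp; intro _ h; subst h; exact hv
      · intro a ha; simp at ha; exact ha.2
    have h2 : (S.filter (fun a => t a ∈ Y)).card = Y.card * d := by
      rw [Finset.card_eq_sum_card_fiberwise (f := t) (t := Y)]
      · rw [Finset.sum_congr rfl (g := fun _ => d)]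
        · simp
        · intro v hv
          rw [← ht v, Finset.filter_filter]
          congr 1
          ext a; simp only [mem_filter]; constructor
          · rintro ⟨h, _, h'⟩; exact ⟨h, h'⟩
          · rintro ⟨h, h'⟩; exact ⟨h, h' ▸ hv, h'⟩
      · intro a ha; simp only [coe_filter, Set.mem_ofPred_eq] at ha; exact ha.2
    have h3 : (S.filter (fun a => s a ∈ X)).card ≤ (S.filter (fun a => t a ∈ Y)).card := by
      apply Finset.card_le_card
      intro a ha
      simp only [mem_filter] at ha ⊢
      refine ⟨ha.1, ?_⟩
      rw [hY, mem_biUnion]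
      exact ⟨s a, ha.2, mem_image.2 ⟨a, by simp [ha.1], rfl⟩⟩
    rw [h1, h2] at h3
    exact Nat.le_of_mul_le_mul_right h3 hd
  obtain ⟨g, hg, hgm⟩ := (Finset.all_card_le_biUnion_card_iff_exists_injective _).1 key
  have hgb : Function.Bijective g := Finite.injective_iff_bijective.1 hg
  have : ∀ v, ∃ a ∈ S, s a = v ∧ t a = g v := by
    intro v
    have := hgm v
    simp only [mem_image, mem_filter] at this
    obtain ⟨a, ⟨h1, h2⟩, h3⟩ := this
    exact ⟨a, h1, h2, h3⟩
  choose e heS hes het using this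
  refine ⟨Finset.univ.image e, ?_, ?_, ?_⟩
  · intro a ha; simp only [mem_image, mem_univ, true_and] at ha; obtain ⟨v, rfl⟩ := ha; exact heS v
  · intro v
    rw [Finset.card_eq_one]
    refine ⟨e v, ?_⟩
    ext a
    simp only [mem_filter, mem_image, mem_univ, true_and, mem_singleton]
    constructor
    · rintro ⟨⟨w, rfl⟩, h⟩; rw [hes] at h; rw [h]
    · rintro rfl; exact ⟨⟨v, rfl⟩, hes v⟩
  · intro v
    obtain ⟨u, rfl⟩ := hgb.2 v
    rw [Finset.card_eq_one]
    refine ⟨e u, ?_⟩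
    ext a
    simp only [mem_filter, mem_image, mem_univ, true_and, mem_singleton]
    constructor
    · rintro ⟨⟨w, rfl⟩, h⟩; rw [het] at h; rw [hg h]
    · rintro rfl; exact ⟨⟨u, rfl⟩, het u⟩

lemma zs_colour {A V : Type*} [Fintype V] [DecidableEq V] [DecidableEq A]
    (s t : A → V) (d : ℕ) : ∀ (S : Finset A)
    (_ : ∀ v, (S.filter (fun a => s a = v)).card = d)
    (_ : ∀ v, (S.filter (fun a => t a = v)).card = d),
    ∃ c : A → ℕ, (∀ a ∈ S, c a < d) ∧ ∀ w : ℕ → ℤ, ∀ v,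
      (∑ a ∈ S.filter (fun a => s a = v), w (c a) = ∑ i ∈ range d, w i) ∧
      (∑ a ∈ S.filter (fun a => t a = v), w (c a) = ∑ i ∈ range d, w i) := by
  induction d with
  | zero =>
    intro S hs ht
    refine ⟨fun _ => 0, ?_, ?_⟩
    · intro a ha
      have := hs (s a)
      rw [Finset.card_eq_zero] at this
      have h2 : a ∈ S.filter (fun b => s b = s a) := by simp [ha]
      rw [this] at h2; simp at h2
    · intro w v
      have h1 := hs v
      have h2 := ht v
      rw [Finset.card_eq_zero] at h1 h2
      rw [h1, h2]; simp
  | succ d ih =>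
    intro S hs ht
    obtain ⟨T, hTS, hT1, hT2⟩ := zs_transversal S s t (d+1) (by omega) hs ht
    have hcard : ∀ (u : A → V) (v : V), (S.filter (fun a => u a = v)).card = d + 1 →
        (T.filter (fun a => u a = v)).card = 1 →
        ((S \ T).filter (fun a => u a = v)).card = d := by
      intro u v h1 h2
      have h3 : (S \ T).filter (fun a => u a = v) =
        S.filter (fun a => u a = v) \ T.filter (fun a => u a = v) := by
        ext a; simp only [mem_filter, mem_sdiff]; tauto
      rw [h3, Finset.card_sdiff_of_subset (Finset.filter_subset_filter _ hTS), h1, h2]; omega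
    obtain ⟨c, hc1, hc2⟩ := ih (S \ T) (fun v => hcard s v (hs v) (hT1 v))
      (fun v => hcard t v (ht v) (hT2 v))
    have hsum : ∀ (w : ℕ → ℤ) (u : A → V) (v : V), (T.filter (fun a => u a = v)).card = 1 →
        (∑ a ∈ (S \ T).filter (fun a => u a = v), w (c a) = ∑ i ∈ range d, w i) →
        ∑ a ∈ S.filter (fun a => u a = v), w (if a ∈ T then d else c a)
          = ∑ i ∈ range (d + 1), w i := by
      intro w u v h1 h2
      have h3 : S.filter (fun a => u a = v) =
        (S \ T).filter (fun a => u a = v) ∪ T.filter (fun a => u a = v) := by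
        rw [← Finset.filter_union, Finset.sdiff_union_of_subset hTS]
      have h4 : Disjoint ((S \ T).filter (fun a => u a = v)) (T.filter (fun a => u a = v)) :=
        Finset.disjoint_filter_filter Finset.sdiff_disjoint
      rw [h3, Finset.sum_union h4, Finset.sum_range_succ, ← h2]
      congr 1
      · apply Finset.sum_congr rfl
        intro a ha
        simp only [mem_filter, mem_sdiff] at ha
        rw [if_neg ha.1.2]
      · rw [Finset.sum_congr rfl (g := fun _ => w d)]
        · rw [Finset.sum_const, h1, one_smul]
        · intro a ha
          simp only [mem_filter] at ha
          rw [if_pos ha.1]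
    refine ⟨fun a => if a ∈ T then d else c a, ?_, ?_⟩
    · intro a ha
      by_cases h : a ∈ T
      · simp [h]
      · simp only [h, if_false]
        have := hc1 a (by simp [ha, h]); omega
    · intro w v
      exact ⟨hsum w s v (hT1 v) (hc2 w v).1, hsum w t v (hT2 v) (hc2 w v).2⟩

lemma zs_weight (d n c0 : ℕ) (ζ : ℤ) (hc : c0 < d) 
    (hζ : (ζ = 1 ∧ n + 1 ≤ d) ∨ (ζ = 2 ∧ 1 ≤ n ∧ n ≤ d)) :
    ∃ w : ℕ → ℤ, (∀ i, w i = 1 ∨ w i = 2) ∧ w c0 = ζ ∧ ∑ i ∈ range d, w i = d + n := by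
  have main : ∃ Z ⊆ range d, Z.card = n ∧ ((ζ = 1 ∧ c0 ∉ Z) ∨ (ζ = 2 ∧ c0 ∈ Z)) := by
    rcases hζ with ⟨h1, h2⟩ | ⟨h1, h2, h3⟩
    · obtain ⟨Z, hZ, hZc⟩ := Finset.exists_subset_card_eq (s := (range d).erase c0) (n := n)
        (by rw [Finset.card_erase_of_mem (by simpa using hc), card_range]; omega)
      exact ⟨Z, hZ.trans (erase_subset _ _), hZc, Or.inl ⟨h1, fun h => by simpa using hZ h⟩⟩
    · obtain ⟨Z, hZ, hZc⟩ := Finset.exists_subset_card_eq (s := (range d).erase c0) (n := n - 1)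
        (by rw [Finset.card_erase_of_mem (by simpa using hc), card_range]; omega)
      refine ⟨insert c0 Z, ?_, ?_, Or.inr ⟨h1, mem_insert_self _ _⟩⟩
      · intro x hx
        rcases mem_insert.1 hx with rfl | h
        · simpa using hc
        · exact erase_subset _ _ (hZ h)
      · rw [card_insert_of_notMem (fun h => by simpa using hZ h)]; omega
  obtain ⟨Z, hZ, hZc, hZ0⟩ := main
  refine ⟨fun i => if i ∈ Z then 2 else 1, ?_, ?_, ?_⟩
  · intro i; by_cases h : i ∈ Z <;> simp [h]
  · rcases hZ0 with ⟨h, h'⟩ | ⟨h, h'⟩ <;> simp [h, h']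
  · have : ∀ i, (if i ∈ Z then (2:ℤ) else 1) = 1 + if i ∈ Z then 1 else 0 := by
      intro i; split_ifs <;> rfl
    simp only [this, Finset.sum_add_distrib]
    rw [Finset.sum_ite_mem, Finset.inter_eq_right.2 hZ]
    simp [hZc]

lemma zs_tutte {W : Type*} [Fintype W] [DecidableEq W] (Γ : SimpleGraph W)
    (Wt : W → W → ℕ) (Q : Finset W) (r : ℕ) (hr : 0 < r)
    (h1 : ∀ p q, 0 < Wt p q → Γ.Adj p q)
    (h2 : ∀ q, ∑ p ∈ Qᶜ, Wt p q ≤ r)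
    (h3 : ∀ K : Finset W, Odd K.card → Disjoint K Q → r ≤ ∑ p ∈ K, ∑ q ∈ Kᶜ, Wt p q)
    (h4 : ∀ p ∈ Q, ∀ q ∈ Q, p ≠ q → Γ.Adj p q)
    (h5 : Even (Fintype.card W)) :
    ∃ M : Γ.Subgraph, M.IsPerfectMatching := by
  classical
  rw [SimpleGraph.tutte]
  intro u hu
  unfold IsTutteViolator at hu
  set H := ((⊤ : Γ.Subgraph).deleteVerts u).coe with hH
  have hmem : ∀ x : W, x ∉ u → x ∈ ((⊤ : Γ.Subgraph).deleteVerts u).verts := by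
    intro x hx; simp [hx]
  let K : H.ConnectedComponent → Finset W := fun c => (Subtype.val '' c.supp).toFinset
  have hKmem : ∀ c x, x ∈ K c ↔ ∃ h : x ∈ ((⊤ : Γ.Subgraph).deleteVerts u).verts,
      H.connectedComponentMk ⟨x, h⟩ = c := by
    intro c x
    simp only [K, Set.mem_toFinset, Set.mem_image, ConnectedComponent.mem_supp_iff]
    constructor
    · rintro ⟨⟨y, hy⟩, h, rfl⟩; exact ⟨hy, h⟩
    · rintro ⟨h, h'⟩; exact ⟨⟨x, h⟩, h', rfl⟩
  have hKcard : ∀ c, (K c).card = c.supp.ncard := by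
    intro c
    simp only [K]
    rw [← Set.ncard_eq_toFinset_card', Set.ncard_image_of_injective _ Subtype.val_injective]
  have hKdisj : ∀ c c', c ≠ c' → Disjoint (K c) (K c') := by
    intro c c' hcc
    rw [Finset.disjoint_left]
    intro x hx hx'
    rw [hKmem] at hx hx'
    obtain ⟨h, e⟩ := hx
    obtain ⟨h', e'⟩ := hx'
    exact hcc (e.symm.trans e')
  have hKadj' : ∀ x y (hx : x ∉ u) (hy : y ∉ u), Γ.Adj x y →
      H.connectedComponentMk ⟨x, hmem x hx⟩ = H.connectedComponentMk ⟨y, hmem y hy⟩ := by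
    intro x y hx hy hxy
    apply ConnectedComponent.connectedComponentMk_eq_of_adj
    rw [hH]
    simp [hx, hy, hxy]
  have hKu : ∀ c x, x ∈ K c → x ∉ u := by
    intro c x hx
    rw [hKmem] at hx
    obtain ⟨h, -⟩ := hx
    simpa using h
  have hKadj : ∀ c x y, x ∈ K c → y ∉ K c → Γ.Adj x y → y ∈ u := by
    intro c x y hx hy hxy
    by_contra hyu
    apply hy
    have hxu := hKu c x hx
    rw [hKmem] at hx ⊢
    obtain ⟨h, e⟩ := hx
    exact ⟨hmem y hyu, by rw [← e, hKadj' x y hxu hyu hxy]⟩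
  let U : Finset W := u.toFinset
  have hUcard : U.card = u.ncard := by simp [U, Set.ncard_eq_toFinset_card']
  let O : Finset H.ConnectedComponent := H.oddComponents.toFinset
  have hOcard : O.card = H.oddComponents.ncard := by simp only [O]; rw [← Set.ncard_eq_toFinset_card']
  have hOmem : ∀ c ∈ O, Odd (K c).card := by
    intro c hc
    rw [hKcard]
    simpa [O] using hc
  let O1 := O.filter (fun c => Disjoint (K c) Q)
  let O2 := O.filter (fun c => ¬ Disjoint (K c) Q)
  have hsplit : O1.card + O2.card = O.card := Finset.card_filter_add_card_filter_not _
  have hO2 : O2.card ≤ 1 := by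
    rw [Finset.card_le_one]
    intro c hc c' hc'
    simp only [O2, mem_filter, Finset.not_disjoint_iff] at hc hc'
    obtain ⟨-, x, hx, hxQ⟩ := hc
    obtain ⟨-, y, hy, hyQ⟩ := hc'
    have hxu := hKu c x hx
    have hyu := hKu c' y hy
    rw [hKmem] at hx hy
    obtain ⟨h, e⟩ := hx
    obtain ⟨h', e'⟩ := hy
    rw [← e, ← e']
    by_cases hxy : x = y
    · subst hxy; rfl
    · exact hKadj' x y hxu hyu (h4 x hxQ y hyQ hxy)
  have hO1 : O1.card ≤ U.card := by
    have a1 : O1.card * r ≤ ∑ c ∈ O1, ∑ p ∈ K c, ∑ q ∈ U, Wt p q := by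
      rw [← smul_eq_mul]
      apply Finset.card_nsmul_le_sum
      intro c hc
      simp only [O1, mem_filter] at hc
      refine (h3 (K c) (hOmem c hc.1) hc.2).trans ?_
      apply Finset.sum_le_sum
      intro p hp
      apply Finset.sum_le_sum_of_ne_zero
      intro q hq hne
      simp only [U, Set.mem_toFinset]
      exact hKadj c p q hp (by simpa using hq) (h1 p q (Nat.pos_of_ne_zero hne))
    have a2 : ∑ c ∈ O1, ∑ p ∈ K c, ∑ q ∈ U, Wt p q
        = ∑ q ∈ U, ∑ p ∈ O1.biUnion K, Wt p q := by
      rw [Finset.sum_comm, Finset.sum_biUnion]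
      intro c _ c' _ h
      exact hKdisj c c' h
    have a3 : ∑ q ∈ U, ∑ p ∈ O1.biUnion K, Wt p q ≤ U.card * r := by
      rw [← smul_eq_mul]
      apply Finset.sum_le_card_nsmul
      intro q _
      refine le_trans ?_ (h2 q)
      apply Finset.sum_le_sum_of_subset
      intro p hp
      simp only [mem_biUnion, O1, mem_filter] at hp
      obtain ⟨c, hc, hp⟩ := hp
      rw [mem_compl]
      exact Finset.disjoint_left.1 hc.2 hp
    rw [a2] at a1
    exact Nat.le_of_mul_le_mul_right (a1.trans a3) hr
  have hpar := SimpleGraph.odd_ncard_oddComponents (G := H)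
  have hc : Nat.card ↑((⊤ : Γ.Subgraph).deleteVerts u).verts + U.card = Fintype.card W := by
    rw [hUcard, Nat.card_coe_set_eq]
    have : ((⊤ : Γ.Subgraph).deleteVerts u).verts = uᶜ := by ext; simp
    rw [this, add_comm, Set.ncard_add_ncard_compl, Nat.card_eq_fintype_card]
  rw [← hOcard] at hpar hu
  rw [← hUcard] at hu
  have e : O.card = U.card + 1 := by omega
  rw [e] at hpar
  rw [← hc] at h5
  clear_value U
  generalize Nat.card ↑((⊤ : Γ.Subgraph).deleteVerts u).verts = n at *
  simp only [Nat.odd_iff, Nat.even_iff] at *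
  omega

/-- Directed weights on the auxiliary graph. -/
def zsWt {A V : Type*} [DecidableEq A] [DecidableEq V] (src : A → V) (rev : A → A) (k m : ℕ) :
    A ⊕ (V × Fin m) → A ⊕ (V × Fin m) → ℕ
  | Sum.inl a, Sum.inl b => if rev a = b ∧ a ≠ b then k else 0
  | Sum.inl a, Sum.inr x => if src a = x.1 then 1 else 0
  | Sum.inr x, Sum.inl a => (if src a = x.1 then 1 else 0) +
      (if src a = x.1 ∧ rev a = a ∧ x.2.val = 0 then k else 0)
  | Sum.inr _, Sum.inr _ => 0

lemma zs_local (k m r a b c d : ℕ) (hkm : k + m = r) (h2m : r ≤ 2 * m)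
    (hab : a + b = r) (hcd : c + d = m) :
    r ≤ a * d + c * b ∨ (a = 0 ∧ c = 0) ∨ (b = 0 ∧ d = 0) ∨
    (a = 1 ∧ c = 0 ∧ a * d + c * b = m) ∨ (b = 1 ∧ d = 0 ∧ a * d + c * b = m) := by
  rcases Nat.eq_zero_or_pos c with hc | hc
  · subst hc
    have : d = m := by omega
    subst this
    rcases Nat.lt_or_ge a 2 with h | h
    · have : a = 0 ∨ a = 1 := by omega
      rcases this with rfl | rfl <;> simp
    · left; nlinarith
  · rcases Nat.eq_zero_or_pos d with hd | hd
    · subst hd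
      have : c = m := by omega
      subst this
      rcases Nat.lt_or_ge b 2 with h | h
      · have : b = 0 ∨ b = 1 := by omega
        rcases this with rfl | rfl <;> simp
      · left; nlinarith
    · left; nlinarith

section
variable {A V : Type*} [Fintype A] [Fintype V] [DecidableEq A] [DecidableEq V]

lemma zs_cut (src : A → V) (rev : A → A) (k m r : ℕ) (hkm : k + m = r) (hk : Even k)
    (h2m : r ≤ 2 * m) (hm : 2 ≤ m) (hrev : ∀ a, rev (rev a) = a)
    (hfib : ∀ v, (univ.filter (fun a => src a = v)).card = r)
    (hnb : ∀ U : Finset V,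
      (univ.filter (fun b => src b ∈ U ∧ src (rev b) ∉ U)).card ≠ 1)
    (K : Finset (A ⊕ (V × Fin m))) (hK : Odd K.card)
    (hKQ : ∀ a, Sum.inl a ∈ K → rev a ≠ a) :
    r ≤ ∑ p ∈ K, ∑ q ∈ Kᶜ, zsWt src rev k m p q := by
  let aK : V → ℕ := fun v => ∑ a, if Sum.inl a ∈ K ∧ src a = v then 1 else 0
  let aN : V → ℕ := fun v => ∑ a, if Sum.inl a ∉ K ∧ src a = v then 1 else 0
  let cK : V → ℕ := fun v => ∑ j : Fin m, if Sum.inr (v, j) ∈ K then 1 else 0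
  let cN : V → ℕ := fun v => ∑ j : Fin m, if Sum.inr (v, j) ∉ K then 1 else 0
  let L : V → ℕ := fun v => aK v * cN v + cK v * aN v
  let T1 : ℕ := ∑ a, ∑ b, if Sum.inl a ∈ K ∧ Sum.inl b ∉ K ∧ rev a = b ∧ a ≠ b then k else 0
  let T2 : ℕ := ∑ v, ∑ j : Fin m, ∑ a,
    if Sum.inr (v, j) ∈ K ∧ Sum.inl a ∉ K ∧ src a = v ∧ rev a = a ∧ j.val = 0 then k else 0
  have hcut : ∑ p ∈ K, ∑ q ∈ Kᶜ, zsWt src rev k m p q = T1 + ∑ v, L v + T2 := by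
    have e0 : ∑ p ∈ K, ∑ q ∈ Kᶜ, zsWt src rev k m p q =
        ∑ p, ∑ q, if p ∈ K ∧ q ∉ K then zsWt src rev k m p q else 0 := by
      have i1 : ∀ g : A ⊕ (V × Fin m) → ℕ, ∑ p ∈ K, g p = ∑ p, if p ∈ K then g p else 0 := by
        intro g; simp [Finset.sum_ite_mem]
      have i2 : ∀ g : A ⊕ (V × Fin m) → ℕ, ∑ p ∈ Kᶜ, g p = ∑ p, if p ∉ K then g p else 0 := by
        intro g; rw [← Finset.sum_filter]; apply Finset.sum_congr _ (fun _ _ => rfl)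
        ext; simp
      rw [i1]
      apply Finset.sum_congr rfl
      intro p _
      rw [i2]
      by_cases h : p ∈ K <;> simp [h]
    have e1 : ∑ a : A, ∑ b : A, (if (Sum.inl a : A ⊕ (V × Fin m)) ∈ K ∧ Sum.inl b ∉ K then
        zsWt src rev k m (Sum.inl a) (Sum.inl b) else 0) = T1 := by
      apply Finset.sum_congr rfl
      intro a _
      apply Finset.sum_congr rfl
      intro b _
      by_cases h : (Sum.inl a : A ⊕ (V × Fin m)) ∈ K <;>
        by_cases h' : (Sum.inl b : A ⊕ (V × Fin m)) ∈ K <;> simp [h, h', zsWt]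
    have e2 : ∑ a : A, ∑ x : V × Fin m, (if Sum.inl a ∈ K ∧ Sum.inr x ∉ K then
        zsWt src rev k m (Sum.inl a) (Sum.inr x) else 0) = ∑ v, aK v * cN v := by
      rw [Finset.sum_comm, Fintype.sum_prod_type]
      apply Finset.sum_congr rfl
      intro v _
      simp only [aK, cN]
      rw [Finset.sum_mul_sum, Finset.sum_comm]
      apply Finset.sum_congr rfl
      intro a _
      apply Finset.sum_congr rfl
      intro j _
      by_cases h : (Sum.inl a : A ⊕ (V × Fin m)) ∈ K <;>
        by_cases h' : (Sum.inr (v, j) : A ⊕ (V × Fin m)) ∈ K <;> simp [h, h', zsWt]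
    have e3 : ∑ x : V × Fin m, ∑ a : A, (if Sum.inr x ∈ K ∧ Sum.inl a ∉ K then
        zsWt src rev k m (Sum.inr x) (Sum.inl a) else 0) = ∑ v, cK v * aN v + T2 := by
      rw [Fintype.sum_prod_type, ← Finset.sum_add_distrib]
      apply Finset.sum_congr rfl
      intro v _
      simp only [cK, aN]
      rw [Finset.sum_mul_sum, ← Finset.sum_add_distrib]
      apply Finset.sum_congr rfl
      intro j _
      rw [← Finset.sum_add_distrib]
      apply Finset.sum_congr rfl
      intro a _
      by_cases h : (Sum.inl a : A ⊕ (V × Fin m)) ∈ K <;>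
        by_cases h' : (Sum.inr (v, j) : A ⊕ (V × Fin m)) ∈ K <;> simp [h, h', zsWt]
    have e4 : ∑ x : V × Fin m, ∑ y : V × Fin m, (if (Sum.inr x : A ⊕ (V × Fin m)) ∈ K ∧
        Sum.inr y ∉ K then zsWt src rev k m (Sum.inr x) (Sum.inr y) else 0) = 0 := by
      apply Finset.sum_eq_zero
      intro x _
      apply Finset.sum_eq_zero
      intro y _
      simp [zsWt]
    rw [e0, Fintype.sum_sum_type]
    simp only [Fintype.sum_sum_type]
    rw [Finset.sum_add_distrib, Finset.sum_add_distrib, e1, e2, e3, e4]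
    simp only [L]
    rw [Finset.sum_add_distrib]
    ring
  have haKN : ∀ v, aK v + aN v = r := by
    intro v
    rw [← hfib v, Finset.card_filter, ← Finset.sum_add_distrib]
    apply Finset.sum_congr rfl
    intro a _
    by_cases h : Sum.inl a ∈ K <;> simp [h]
  have hcKN : ∀ v, cK v + cN v = m := by
    intro v
    have : m = ∑ j : Fin m, 1 := by simp
    rw [this, ← Finset.sum_add_distrib]
    apply Finset.sum_congr rfl
    intro a _
    by_cases h : Sum.inr (v, a) ∈ K <;> simp [h]
  have hcard : K.card = ∑ v, (aK v + cK v) := by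
    have : K.card = ∑ p, if p ∈ K then 1 else 0 := by simp
    rw [this, Fintype.sum_sum_type, Fintype.sum_prod_type, Finset.sum_add_distrib]
    congr 1
    simp only [aK]
    rw [Finset.sum_comm]
    apply Finset.sum_congr rfl
    intro a _
    by_cases h : Sum.inl a ∈ K <;> simp [h]
  rw [hcut]
  by_contra hlt
  push Not at hlt
  have hloc := fun v => zs_local k m r (aK v) (aN v) (cK v) (cN v) hkm h2m (haKN v) (hcKN v)
  have hLle : ∀ v, L v ≤ ∑ v, L v := fun v =>
    Finset.single_le_sum (f := L) (fun _ _ => Nat.zero_le _) (mem_univ v)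
  have hLle2 : ∀ v w, v ≠ w → L v + L w ≤ ∑ v, L v := by
    intro v w hvw
    rw [← Finset.sum_pair hvw]
    exact Finset.sum_le_sum_of_subset (subset_univ _)
  have hT1 : ∀ a, Sum.inl a ∈ K → Sum.inl (rev a) ∉ K → k ≤ T1 := by
    intro a ha hb
    have h1 : (∑ b, if Sum.inl a ∈ K ∧ Sum.inl b ∉ K ∧ rev a = b ∧ a ≠ b then k else 0) ≤ T1 :=
      Finset.single_le_sum (f := fun a => ∑ b, if Sum.inl a ∈ K ∧ Sum.inl b ∉ K ∧ rev a = b ∧ a ≠ b then k else 0) (fun _ _ => Nat.zero_le _) (mem_univ a)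
    refine le_trans ?_ h1
    have h2 := Finset.single_le_sum (f := fun b => if Sum.inl a ∈ K ∧ Sum.inl b ∉ K ∧ rev a = b ∧ a ≠ b then k else 0) (fun _ _ => Nat.zero_le _) (mem_univ (rev a))
    refine le_trans ?_ h2
    have : a ≠ rev a := fun h => hKQ a ha h.symm
    simp [ha, hb, this]
  have hT2 : ∀ a, rev a = a → Sum.inl a ∉ K → (∀ j, Sum.inr (src a, j) ∈ K) → k ≤ T2 := by
    intro a ha hb hc
    have h1 := Finset.single_le_sum (f := fun v => ∑ j : Fin m, ∑ a,
      if Sum.inr (v, j) ∈ K ∧ Sum.inl a ∉ K ∧ src a = v ∧ rev a = a ∧ j.val = 0 then k else 0)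
      (fun _ _ => Nat.zero_le _) (mem_univ (src a))
    refine le_trans ?_ h1
    have h2 := Finset.single_le_sum (f := fun j : Fin m => ∑ b,
      if Sum.inr (src a, j) ∈ K ∧ Sum.inl b ∉ K ∧ src b = src a ∧ rev b = b ∧ j.val = 0 then k else 0)
      (fun _ _ => Nat.zero_le _) (mem_univ ⟨0, by omega⟩)
    refine le_trans ?_ h2
    have h3 := Finset.single_le_sum (f := fun b =>
      if Sum.inr (src a, (⟨0, by omega⟩ : Fin m)) ∈ K ∧ Sum.inl b ∉ K ∧ src b = src a ∧ rev b = b ∧ (⟨0, by omega⟩ : Fin m).val = 0 then k else 0)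
      (fun _ _ => Nat.zero_le _) (mem_univ a)
    refine le_trans ?_ h3
    simp [ha, hb, hc]
  have haK0 : ∀ v, aK v = 0 → ∀ a, src a = v → Sum.inl a ∉ K := by
    intro v hv a ha h
    simp only [aK, Finset.sum_eq_zero_iff, mem_univ, true_implies] at hv
    have := hv a
    simp [h, ha] at this
  have haN0 : ∀ v, aN v = 0 → ∀ a, src a = v → Sum.inl a ∈ K := by
    intro v hv a ha
    by_contra h
    simp only [aN, Finset.sum_eq_zero_iff, mem_univ, true_implies] at hv
    have := hv a
    simp [h, ha] at this
  have hcN0 : ∀ v, cN v = 0 → ∀ j, Sum.inr (v, j) ∈ K := by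
    intro v hv a
    by_contra h
    simp only [cN, Finset.sum_eq_zero_iff, mem_univ, true_implies] at hv
    have := hv a
    simp [h] at this
  have haK1 : ∀ v, aK v = 1 → ∃ d, src d = v ∧ Sum.inl d ∈ K ∧
      ∀ a, src a = v → Sum.inl a ∈ K → a = d := by
    intro v hv
    simp only [aK] at hv
    rw [← Finset.card_filter, Finset.card_eq_one] at hv
    obtain ⟨d, hd⟩ := hv
    have hd' := fun a => Finset.ext_iff.1 hd a
    simp only [mem_filter, mem_univ, true_and, mem_singleton] at hd'
    exact ⟨d, ((hd' d).2 rfl).2, ((hd' d).2 rfl).1, fun a h h' => (hd' a).1 ⟨h', h⟩⟩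
  have haN1 : ∀ v, aN v = 1 → ∃ d, src d = v ∧ Sum.inl d ∉ K ∧
      ∀ a, src a = v → Sum.inl a ∉ K → a = d := by
    intro v hv
    simp only [aN] at hv
    rw [← Finset.card_filter, Finset.card_eq_one] at hv
    obtain ⟨d, hd⟩ := hv
    have hd' := fun a => Finset.ext_iff.1 hd a
    simp only [mem_filter, mem_univ, true_and, mem_singleton] at hd'
    exact ⟨d, ((hd' d).2 rfl).2, ((hd' d).2 rfl).1, fun a h h' => (hd' a).1 ⟨h', h⟩⟩
  -- a vertex with nonzero cost
  have hex : ∃ v, L v = m ∧ ((aK v = 1 ∧ cK v = 0) ∨ (aN v = 1 ∧ cN v = 0)) := by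
    by_contra hno
    push Not at hno
    have : Even K.card := by
      rw [hcard]
      apply Finset.even_sum
      intro v _
      have h1 := hLle v
      have h2 := haKN v
      have h3 := hcKN v
      have h4 := hno v
      have h5 : L v = aK v * cN v + cK v * aN v := rfl
      rw [Nat.even_iff] at *
      rcases hloc v with h | h | h | h | h <;> omega
    rw [← Nat.not_odd_iff_even] at this
    exact this hK
  obtain ⟨v0, hL0, hv0⟩ := hex
  have hother : ∀ v, v ≠ v0 → (aK v = 0 ∧ cK v = 0) ∨ (aN v = 0 ∧ cN v = 0) := by
    intro v hv
    have h1 := hLle2 v v0 hv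
    have h5 : L v = aK v * cN v + cK v * aN v := rfl
    rcases hloc v with h | h | h | h | h
    · omega
    · exact Or.inl h
    · exact Or.inr h
    · omega
    · omega
  have hLv0 := hLle v0
  have hns : ∀ a, Sum.inl a ∈ K → Sum.inl (rev a) ∈ K := by
    intro a ha
    by_contra hb
    have := hT1 a ha hb
    omega
  have hns' : ∀ a, Sum.inl (rev a) ∈ K → Sum.inl a ∈ K := by
    intro a ha
    have := hns _ ha
    rwa [hrev] at this
  rcases hv0 with ⟨ha, hc⟩ | ⟨ha, hc⟩
  · obtain ⟨d, hd1, hd2, hd3⟩ := haK1 v0 ha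
    apply hnb (univ.filter (fun v => aN v = 0))
    rw [Finset.card_eq_one]
    refine ⟨rev d, ?_⟩
    have hU0 : aN v0 ≠ 0 := by have := haKN v0; omega
    ext b
    simp only [mem_filter, mem_univ, true_and, mem_singleton]
    constructor
    · rintro ⟨h1, h2⟩
      have h3 := hns _ (haN0 _ h1 b rfl)
      have : src (rev b) = v0 := by
        by_contra h
        rcases hother _ h with h' | h'
        · exact haK0 _ h'.1 _ rfl h3
        · exact h2 h'.1
      rw [← hd3 _ this h3, hrev]
    · rintro rfl
      rw [hrev, hd1]
      refine ⟨?_, hU0⟩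
      have h3 := hns _ hd2
      by_cases h : src (rev d) = v0
      · exact absurd (hd3 _ h h3) (hKQ d hd2)
      · rcases hother _ h with h' | h'
        · exact absurd h3 (haK0 _ h'.1 _ rfl)
        · exact h'.1
  · obtain ⟨d, hd1, hd2, hd3⟩ := haN1 v0 ha
    have hdd : rev d ≠ d := by
      intro h
      have := hT2 d h hd2 (by rw [hd1]; exact hcN0 v0 hc)
      omega
    apply hnb (univ.filter (fun v => aK v ≠ 0))
    rw [Finset.card_eq_one]
    refine ⟨d, ?_⟩
    have hU0 : aK v0 ≠ 0 := by have := haKN v0; omega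
    ext b
    simp only [mem_filter, mem_univ, true_and, mem_singleton, not_not]
    constructor
    · rintro ⟨h1, h2⟩
      have h3 : Sum.inl b ∉ K := fun h => haK0 _ h2 _ rfl (hns b h)
      have : src b = v0 := by
        by_contra h
        rcases hother _ h with h' | h'
        · exact h1 h'.1
        · exact h3 (haN0 _ h'.1 _ rfl)
      exact hd3 _ this h3
    · rintro rfl
      rw [hd1]
      refine ⟨hU0, ?_⟩
      have h3 : Sum.inl (rev b) ∉ K := fun h => hd2 (hns' b h)
      by_cases h : src (rev b) = v0
      · exact absurd (hd3 _ h h3) hdd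
      · rcases hother _ h with h' | h'
        · exact h'.1
        · exact absurd (haN0 _ h'.1 _ rfl) h3
end

/-- Adjacency of the auxiliary graph. -/
def zsAdj {A V : Type*} (src : A → V) (rev : A → A) (m : ℕ) :
    A ⊕ (V × Fin m) → A ⊕ (V × Fin m) → Prop
  | Sum.inl a, Sum.inl b => a ≠ b ∧ (rev a = b ∨ (rev a = a ∧ rev b = b))
  | Sum.inl a, Sum.inr x => src a = x.1
  | Sum.inr x, Sum.inl a => src a = x.1
  | Sum.inr _, Sum.inr _ => False

/-- The auxiliary graph. -/
def zsGraph {A V : Type*} (src : A → V) (rev : A → A) (m : ℕ) (hrev : ∀ a, rev (rev a) = a) :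
    SimpleGraph (A ⊕ (V × Fin m)) where
  Adj := zsAdj src rev m
  symm := by
    constructor
    rintro (a | x) (b | y) h
    · simp only [zsAdj] at h ⊢
      refine ⟨h.1.symm, ?_⟩
      rcases h.2 with h' | h'
      · left; rw [← h', hrev]
      · right; exact ⟨h'.2, h'.1⟩
    · exact h
    · exact h
    · exact h
  loopless := by
    constructor
    rintro (a | x) h
    · exact h.1 rfl
    · exact h

section
variable {A V : Type*} [Fintype A] [Fintype V] [DecidableEq A] [DecidableEq V]

lemma zs_inflow (src : A → V) (rev : A → A) (k m r : ℕ) (hkm : k + m = r)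
    (hm : 2 ≤ m) (hrev : ∀ a, rev (rev a) = a)
    (hfib : ∀ v, (univ.filter (fun a => src a = v)).card = r) (q : A ⊕ (V × Fin m)) :
    ∑ p, zsWt src rev k m p q ≤ r := by
  rw [Fintype.sum_sum_type]
  rcases q with b | x
  · simp only [zsWt]
    rw [Finset.sum_add_distrib]
    have e2 : ∑ x : V × Fin m, (if src b = x.1 then 1 else 0) = m := by
      rw [Fintype.sum_prod_type, Finset.sum_eq_single (src b)]
      · simp
      · intro v _ hv
        simp [hv.symm]
      · simp
    have e3 : ∑ x : V × Fin m, (if src b = x.1 ∧ rev b = b ∧ x.2.val = 0 then k else 0)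
        = if rev b = b then k else 0 := by
      rw [Fintype.sum_prod_type, Finset.sum_eq_single (src b)]
      · rw [Finset.sum_eq_single ⟨0, by omega⟩]
        · simp
        · intro j _ hj
          have : j.val ≠ 0 := fun h => hj (Fin.ext h)
          simp [this]
        · simp
      · intro v _ hv
        simp [hv.symm]
      · simp
    have e1 : ∑ a, (if rev a = b ∧ a ≠ b then k else 0) = if rev b = b then 0 else k := by
      rw [Finset.sum_eq_single (rev b)]
      · rw [hrev]
        by_cases h : rev b = b <;> simp [h]
      · intro a _ ha
        have : rev a ≠ b := fun h => ha (by rw [← h, hrev])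
        simp [this]
      · simp
    rw [e1, e2, e3]
    split_ifs <;> omega
  · simp only [zsWt, Finset.sum_const_zero, add_zero]
    rw [← Finset.card_filter, hfib]

lemma zs_factor (src : A → V) (rev : A → A) (k m r : ℕ) (hkm : k + m = r) (hk : Even k)
    (h2m : r ≤ 2 * m) (hm : 2 ≤ m) (hrev : ∀ a, rev (rev a) = a)
    (hfib : ∀ v, (univ.filter (fun a => src a = v)).card = r)
    (hnb : ∀ U : Finset V,
      (univ.filter (fun b => src b ∈ U ∧ src (rev b) ∉ U)).card ≠ 1) :
    ∃ P : Finset A, (∀ a ∈ P, rev a ∈ P) ∧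
      ∀ v, (P.filter (fun a => src a = v)).card = k := by
  classical
  have hcardA : Fintype.card A = Fintype.card V * r := by
    rw [← Finset.card_univ, Finset.card_eq_sum_card_fiberwise (f := src) (t := univ)
      (fun _ _ => mem_coe.2 (mem_univ _)), Finset.sum_congr rfl (fun v _ => hfib v)]
    simp
  obtain ⟨M, hM⟩ := zs_tutte (zsGraph src rev m hrev) (zsWt src rev k m)
    (univ.filter (fun p => ∃ a, p = Sum.inl a ∧ rev a = a)) r (by omega)
    (by
      rintro (a | x) (b | y) h
      · simp only [zsWt] at h
        by_cases h' : rev a = b ∧ a ≠ b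
        · exact ⟨h'.2, Or.inl h'.1⟩
        · simp [h'] at h
      · simp only [zsWt] at h
        by_contra h'
        have : src a ≠ y.1 := h'
        simp [this] at h
      · simp only [zsWt] at h
        by_contra h'
        have : src b ≠ x.1 := h'
        simp [this] at h
      · simp [zsWt] at h)
    (fun q => le_trans (Finset.sum_le_sum_of_subset (subset_univ _))
      (zs_inflow src rev k m r hkm hm hrev hfib q))
    (by
      intro K hK hKQ
      apply zs_cut src rev k m r hkm hk h2m hm hrev hfib hnb K hK
      intro a ha h
      exact Finset.disjoint_left.1 hKQ ha (by simp [h]))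
    (by
      intro p hp q hq hpq
      simp only [mem_filter, mem_univ, true_and] at hp hq
      obtain ⟨a, rfl, ha⟩ := hp
      obtain ⟨b, rfl, hb⟩ := hq
      exact ⟨fun h => hpq (by rw [h]), Or.inr ⟨ha, hb⟩⟩)
    (by
      rw [Fintype.card_sum, Fintype.card_prod, Fintype.card_fin, hcardA, ← mul_add]
      apply Even.mul_left
      rw [← hkm, add_assoc]
      exact hk.add ⟨m, rfl⟩)
  rw [Subgraph.isPerfectMatching_iff] at hM
  choose μ hμ hμu using hM
  simp only at hμ hμu
  refine ⟨univ.filter (fun a => ∃ b, M.Adj (Sum.inl a) (Sum.inl b)), ?_, ?_⟩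
  · intro a ha
    simp only [mem_filter, mem_univ, true_and] at ha ⊢
    obtain ⟨b, hb⟩ := ha
    have hadj : zsAdj src rev m (Sum.inl a) (Sum.inl b) := hb.adj_sub
    rcases hadj.2 with h | h
    · exact ⟨a, by rw [h]; exact hb.symm⟩
    · rw [h.1]; exact ⟨b, hb⟩
  · intro v
    -- the darts matched to cores of v
    have hcore : ∀ j : Fin m, ∃ a, src a = v ∧ M.Adj (Sum.inl a) (Sum.inr (v, j)) := by
      intro j
      have h1 := hμ (Sum.inr (v, j))
      rcases h : μ (Sum.inr (v, j)) with a | y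
      · rw [h] at h1
        have hadj : zsAdj src rev m (Sum.inr (v, j)) (Sum.inl a) := h1.adj_sub
        exact ⟨a, hadj, h1.symm⟩
      · rw [h] at h1
        have hadj : zsAdj src rev m (Sum.inr (v, j)) (Sum.inr y) := h1.adj_sub
        exact hadj.elim
    choose e he1 he2 using hcore
    have heinj : Function.Injective e := by
      intro i j hij
      have h1 := hμu _ _ (he2 i)
      have h2 := hμu _ _ (he2 j)
      rw [hij, ← h2] at h1
      simpa using h1
    have himg : (univ.filter (fun a => src a = v)).filter
        (fun a => ¬ ∃ b, M.Adj (Sum.inl a) (Sum.inl b)) = univ.image e := by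
      ext a
      simp only [mem_filter, mem_univ, true_and, mem_image]
      constructor
      · rintro ⟨h1, h2⟩
        have h3 := hμ (Sum.inl a)
        rcases h : μ (Sum.inl a) with b | ⟨w, j⟩
        · rw [h] at h3; exact absurd ⟨b, h3⟩ h2
        · rw [h] at h3
          have hadj : zsAdj src rev m (Sum.inl a) (Sum.inr (w, j)) := h3.adj_sub
          have hw : w = v := by rw [← h1]; exact hadj.symm
          subst hw
          refine ⟨j, ?_⟩
          have h4 := hμu _ _ h3.symm
          have h5 := hμu _ _ (he2 j).symm
          rw [← h4] at h5
          simpa using h5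
      · rintro ⟨j, rfl⟩
        refine ⟨he1 j, ?_⟩
        rintro ⟨b, hb⟩
        have h4 := hμu _ _ hb
        have h5 := hμu _ _ (he2 j)
        rw [← h4] at h5
        simp at h5
    have h1 := Finset.card_filter_add_card_filter_not (s := univ.filter (fun a => src a = v))
      (fun a => ∃ b, M.Adj (Sum.inl a) (Sum.inl b))
    rw [himg, Finset.card_image_of_injective _ heinj, hfib] at h1
    simp only [card_univ, Fintype.card_fin] at h1
    rw [Finset.filter_comm] at h1
    omega
end

/-- Good functions on darts. -/
def zsGood {A V : Type*} [Fintype A] [DecidableEq V] (src : A → V) (rev : A → A)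
    (f : A → ℤ) : Prop :=
  (∀ a, f (rev a) = f a) ∧ (∀ a, f a ≠ 0 ∧ (f a).natAbs ≤ 4) ∧
  (∀ a, rev a = a → (f a).natAbs = 2 ∨ (f a).natAbs = 4) ∧
  ∀ v, ∑ a ∈ univ.filter (fun a => src a = v), f a = 0

section
variable {A V : Type*} [Fintype A] [Fintype V] [DecidableEq A] [DecidableEq V]

lemma zsGood_neg (src : A → V) (rev : A → A) (f : A → ℤ) (h : zsGood src rev f) :
    zsGood src rev (fun a => - f a) := by
  obtain ⟨h1, h2, h3, h4⟩ := h
  refine ⟨fun a => by simp [h1], fun a => by simpa using h2 a, fun a ha => by simpa using h3 a ha,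
    fun v => ?_⟩
  rw [Finset.sum_neg_distrib, h4, neg_zero]

lemma zs_tgt (src : A → V) (rev : A → A) (hrev : ∀ a, rev (rev a) = a) (S : Finset A)
    (hS : ∀ a ∈ S, rev a ∈ S) (d : ℕ) (h : ∀ v, (S.filter (fun a => src a = v)).card = d) :
    ∀ v, (S.filter (fun a => src (rev a) = v)).card = d := by
  intro v
  rw [← h v]
  apply Finset.card_bij' (fun a _ => rev a) (fun a _ => rev a)
  · intro a ha; simp only [mem_filter] at ha ⊢; exact ⟨hS _ ha.1, ha.2⟩
  · intro a ha; simp only [mem_filter] at ha ⊢; rw [hrev]; exact ⟨hS _ ha.1, ha.2⟩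
  · intro a _; exact hrev a
  · intro a _; exact hrev a

lemma zs_bridgeless (src : A → V) (r : ℕ) (hodd : Odd r) (hr : 9 ≤ r)
    (hfib : ∀ v, (univ.filter (fun a => src a = v)).card = r)
    (rev : A → A) (hrev : ∀ a, rev (rev a) = a)
    (hnb : ∀ U : Finset V,
      (univ.filter (fun b => src b ∈ U ∧ src (rev b) ∉ U)).card ≠ 1)
    (a0 : A) (ζ : ℤ) (hζ : ζ = 1 ∨ ζ = 2) :
    ∃ f, zsGood src rev f ∧ (rev a0 = a0 → f a0 = 2 * ζ) := by
  obtain ⟨k, m, hkm, hk, h2m, hm, hk4, hmk⟩ : ∃ k m : ℕ, k + m = r ∧ Even k ∧ r ≤ 2 * m ∧ 2 ≤ m ∧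
      4 ≤ k ∧ m ≤ k + 3 := by
    have := Nat.odd_iff.1 hodd
    exact ⟨2 * (r / 4), r - 2 * (r / 4), by omega, even_two_mul _, by omega, by omega, by omega,
      by omega⟩
  obtain ⟨P, hP, hPk⟩ := zs_factor src rev k m r hkm hk h2m hm hrev hfib hnb
  have hN : ∀ a ∈ Pᶜ, rev a ∈ Pᶜ := by
    intro a ha
    rw [mem_compl] at ha ⊢
    intro h
    have := hP _ h
    rw [hrev] at this
    exact ha this
  have hNm : ∀ v, (Pᶜ.filter (fun a => src a = v)).card = m := by
    intro v
    have h1 := Finset.card_filter_add_card_filter_not (s := univ.filter (fun a => src a = v))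
      (fun a => a ∈ P)
    rw [hfib, Finset.filter_comm, Finset.filter_comm (p := fun a => src a = v)] at h1
    have h2 : univ.filter (fun a => a ∈ P) = P := by ext; simp
    have h3 : univ.filter (fun a => a ∉ P) = Pᶜ := by ext; simp
    rw [h2, h3, hPk] at h1
    omega
  obtain ⟨cP, hcP, hsP⟩ := zs_colour src (fun a => src (rev a)) k P hPk
    (zs_tgt src rev hrev P hP k hPk)
  obtain ⟨cN, hcN, hsN⟩ := zs_colour src (fun a => src (rev a)) m Pᶜ hNm
    (zs_tgt src rev hrev Pᶜ hN m hNm)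
  obtain ⟨T, hT⟩ : ∃ T : ℕ, (ζ = 1 ∧ T = m) ∨ (ζ = 2 ∧ T = m + 1) := by
    rcases hζ with h | h
    · exact ⟨m, Or.inl ⟨h, rfl⟩⟩
    · exact ⟨m + 1, Or.inr ⟨h, rfl⟩⟩
  obtain ⟨wP, hwP, hwP0, hwPs⟩ := zs_weight k (T - k) (if a0 ∈ P then cP a0 else 0) ζ
    (by split_ifs with h
        · exact hcP _ h
        · omega) (by omega)
  obtain ⟨wN, hwN, hwN0, hwNs⟩ := zs_weight m (T - m) (if a0 ∈ P then 0 else cN a0) ζ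
    (by split_ifs with h
        · omega
        · exact hcN _ (mem_compl.2 h)) (by omega)
  set M : A → ℤ := fun a => if a ∈ P then wP (cP a) else - wN (cN a) with hMdef
  have hsum : ∀ (u : A → V) (v : V),
      ∑ a ∈ P.filter (fun a => u a = v), wP (cP a) = ∑ i ∈ range k, wP i →
      ∑ a ∈ Pᶜ.filter (fun a => u a = v), wN (cN a) = ∑ i ∈ range m, wN i →
      ∑ a ∈ univ.filter (fun a => u a = v), M a = 0 := by
    intro u v h1 h2
    have h3 : univ.filter (fun a => u a = v) =
        P.filter (fun a => u a = v) ∪ Pᶜ.filter (fun a => u a = v) := by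
      rw [← Finset.filter_union, Finset.union_compl]
    rw [h3, Finset.sum_union (Finset.disjoint_filter_filter disjoint_compl_right)]
    have h4 : ∑ a ∈ P.filter (fun a => u a = v), M a = ∑ i ∈ range k, wP i := by
      rw [← h1]
      apply Finset.sum_congr rfl
      intro a ha
      simp only [mem_filter] at ha
      simp [M, ha.1]
    have h5 : ∑ a ∈ Pᶜ.filter (fun a => u a = v), M a = - ∑ i ∈ range m, wN i := by
      rw [← h2, ← Finset.sum_neg_distrib]
      apply Finset.sum_congr rfl
      intro a ha
      simp only [mem_filter, mem_compl] at ha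
      simp [M, ha.1]
    rw [h4, h5, hwPs, hwNs]
    omega
  have hMP : ∀ a ∈ P, M a = 1 ∨ M a = 2 := by
    intro a ha
    simp only [M, ha, if_true]
    exact hwP _
  have hMN : ∀ a, a ∉ P → M a = -1 ∨ M a = -2 := by
    intro a ha
    simp only [M, ha, if_false]
    have := hwN (cN a)
    omega
  have hM0 : M a0 = ζ ∨ M a0 = - ζ := by
    by_cases h : a0 ∈ P
    · left; simpa [M, h] using hwP0
    · right; simpa [M, h] using hwN0
  have hgood : zsGood src rev (fun a => M a + M (rev a)) := by
    refine ⟨?_, ?_, ?_, ?_⟩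
    · intro a; simp only [hrev]; ring
    · intro a
      simp only
      by_cases h : a ∈ P
      · have h1 := hMP a h
        have h2 := hMP _ (hP a h)
        omega
      · have h1 := hMN a h
        have h2 := hMN _ (mem_compl.1 (hN a (mem_compl.2 h)))
        omega
    · intro a ha
      simp only [ha]
      by_cases h : a ∈ P
      · have h1 := hMP a h
        omega
      · have h1 := hMN a h
        omega
    · intro v
      rw [Finset.sum_add_distrib, hsum src v (hsP wP v).1 (hsN wN v).1, zero_add,
        ← hsum (fun a => src (rev a)) v (hsP wP v).2 (hsN wN v).2]
      apply Finset.sum_bij' (fun a _ => rev a) (fun a _ => rev a)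
      · intro a ha; simp only [mem_filter, mem_univ, true_and] at ha ⊢; rw [hrev]; exact ha
      · intro a ha; simp only [mem_filter, mem_univ, true_and] at ha ⊢; exact ha
      · intro a _; exact hrev a
      · intro a _; exact hrev a
      · intro a _; rfl
  rcases hM0 with h | h
  · exact ⟨_, hgood, fun h0 => by simp only [h0, h]; ring⟩
  · exact ⟨_, zsGood_neg _ _ _ hgood, fun h0 => by simp only [h0, h]; ring⟩

lemma zs_bridge (src : A → V) 
    (rev : A → A) (hrev : ∀ a, rev (rev a) = a)
    (IH : ∀ rev' : A → A, (∀ a, rev' (rev' a) = a) →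
      (univ.filter (fun b => rev' b ≠ b)).card < (univ.filter (fun b => rev b ≠ b)).card →
      ∀ (a0 : A) (ζ : ℤ), (ζ = 1 ∨ ζ = 2) →
      ∃ f, zsGood src rev' f ∧ (rev' a0 = a0 → f a0 = 2 * ζ))
    (U : Finset V) (a : A) (hU : ∀ b, src b ∈ U ∧ src (rev b) ∉ U ↔ b = a)
    (a0 : A) (h0 : src a0 ∈ U) (ζ : ℤ) (hζ : ζ = 1 ∨ ζ = 2) :
    ∃ f, zsGood src rev f ∧ (rev a0 = a0 → f a0 = 2 * ζ) := by
  obtain ⟨ha1, ha2⟩ := (hU a).2 rfl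
  have hne : rev a ≠ a := fun h => ha2 (by rw [h]; exact ha1)
  let rev' : A → A := fun b => if b = a ∨ b = rev a then b else rev b
  have hr1 : rev' a = a := by simp [rev']
  have hr2 : rev' (rev a) = rev a := by simp [rev']
  have hr3 : ∀ b, b ≠ a → b ≠ rev a → rev' b = rev b := by
    intro b h1 h2; simp [rev', h1, h2]
  have hr4 : ∀ b, rev b = b → rev' b = b := by
    intro b hb; simp [rev', hb]
  have hrr : ∀ b, rev' (rev' b) = b := by
    intro b
    by_cases h1 : b = a
    · subst h1; rw [hr1, hr1]
    by_cases h2 : b = rev a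
    · subst h2; rw [hr2, hr2]
    rw [hr3 b h1 h2, hr3, hrev]
    · intro h; exact h2 (by rw [← h, hrev])
    · intro h; exact h1 (by rw [← hrev b, h, hrev])
  have hlt : (univ.filter (fun b => rev' b ≠ b)).card < (univ.filter (fun b => rev b ≠ b)).card := by
    apply Finset.card_lt_card
    rw [Finset.ssubset_iff_of_subset]
    · exact ⟨a, by simp [hne], by simp [hr1]⟩
    · intro b hb
      simp only [mem_filter, mem_univ, true_and] at hb ⊢
      exact fun h => hb (hr4 b h)
  obtain ⟨f1, hf1, hf10⟩ := IH rev' hrr hlt a0 ζ hζ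
  obtain ⟨f2, hf2, hf2a⟩ : ∃ f2, zsGood src rev' f2 ∧ f2 (rev a) = f1 a := by
    have h24 := hf1.2.2.1 a hr1
    obtain ⟨ζ', hζ', he⟩ : ∃ ζ' : ℤ, (ζ' = 1 ∨ ζ' = 2) ∧ (f1 a = 2 * ζ' ∨ f1 a = -(2 * ζ')) := by
      rcases h24 with h | h
      · exact ⟨1, Or.inl rfl, by omega⟩
      · exact ⟨2, Or.inr rfl, by omega⟩
    obtain ⟨f, hf, hf0⟩ := IH rev' hrr hlt (rev a) ζ' hζ'
    rcases he with he | he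
    · exact ⟨f, hf, by rw [hf0 hr2, he]⟩
    · exact ⟨_, zsGood_neg _ _ _ hf, by simp only [hf0 hr2, he]⟩
  refine ⟨fun b => if src b ∈ U then f1 b else f2 b, ⟨?_, ?_, ?_, ?_⟩, ?_⟩
  · intro b
    by_cases h1 : b = a
    · subst h1; simp [ha1, ha2, hf2a]
    by_cases h2 : b = rev a
    · subst h2; simp [hrev, ha1, ha2, hf2a]
    have h3 := (hU b).not.2 h1
    have h4 : ¬ (rev b = a) := fun h => h2 (by rw [← h, hrev])
    have h5 := (hU (rev b)).not.2 h4
    rw [hrev] at h5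
    have e1 := hf1.1 b
    have e2 := hf2.1 b
    rw [hr3 b h1 h2] at e1 e2
    by_cases h : src b ∈ U
    · have h' : src (rev b) ∈ U := by tauto
      simp [h, h', e1]
    · have h' : src (rev b) ∉ U := by tauto
      simp [h, h', e2]
  · intro b
    by_cases h : src b ∈ U
    · simpa [h] using hf1.2.1 b
    · simpa [h] using hf2.2.1 b
  · intro b hb
    by_cases h : src b ∈ U
    · simpa [h] using hf1.2.2.1 b (hr4 b hb)
    · simpa [h] using hf2.2.2.1 b (hr4 b hb)
  · intro v
    by_cases h : v ∈ U
    · rw [← hf1.2.2.2 v]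
      apply Finset.sum_congr rfl
      intro b hb
      simp only [mem_filter, mem_univ, true_and] at hb
      simp [hb, h]
    · rw [← hf2.2.2.2 v]
      apply Finset.sum_congr rfl
      intro b hb
      simp only [mem_filter, mem_univ, true_and] at hb
      simp [hb, h]
  · intro h
    simp only [h0, if_true]
    exact hf10 (hr4 _ h)

lemma zs_main (src : A → V) (r : ℕ) (hodd : Odd r) (hr : 9 ≤ r)
    (hfib : ∀ v, (univ.filter (fun a => src a = v)).card = r) (n : ℕ) :
    ∀ rev : A → A, (∀ a, rev (rev a) = a) → (univ.filter (fun b => rev b ≠ b)).card = n →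
    ∀ (a0 : A) (ζ : ℤ), (ζ = 1 ∨ ζ = 2) →
      ∃ f, zsGood src rev f ∧ (rev a0 = a0 → f a0 = 2 * ζ) := by
  induction n using Nat.strong_induction_on with
  | _ n IH =>
    intro rev hrev hn a0 ζ hζ
    by_cases hnb : ∀ U : Finset V,
      (univ.filter (fun b => src b ∈ U ∧ src (rev b) ∉ U)).card ≠ 1
    · exact zs_bridgeless src r hodd hr hfib rev hrev hnb a0 ζ hζ
    · push Not at hnb
      obtain ⟨U, hU⟩ := hnb
      rw [Finset.card_eq_one] at hU
      obtain ⟨a, ha⟩ := hU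
      have ha' := fun b => Finset.ext_iff.1 ha b
      simp only [mem_filter, mem_univ, true_and, mem_singleton] at ha'
      have IH' : ∀ rev' : A → A, (∀ a, rev' (rev' a) = a) →
        (univ.filter (fun b => rev' b ≠ b)).card < (univ.filter (fun b => rev b ≠ b)).card →
        ∀ (a0 : A) (ζ : ℤ), (ζ = 1 ∨ ζ = 2) →
        ∃ f, zsGood src rev' f ∧ (rev' a0 = a0 → f a0 = 2 * ζ) := by
        intro rev' h1 h2
        exact IH _ (hn ▸ h2) rev' h1 rfl
      by_cases h0 : src a0 ∈ U
      · exact zs_bridge src rev hrev IH' U a ha' a0 h0 ζ hζ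
      · refine zs_bridge src rev hrev IH' Uᶜ (rev a) ?_ a0 (mem_compl.2 h0) ζ hζ
        intro b
        have h1 := ha' (rev b)
        rw [hrev] at h1
        simp only [mem_compl, not_not]
        rw [and_comm, h1]
        constructor
        · rintro h; rw [← h, hrev]
        · rintro h; rw [h, hrev]
end

/-- For every odd integer `r ≥ 9`, every `r`-regular graph admits a zero-sum 5-flow. -/
theorem stmt_3 {V : Type*} [Fintype V] [DecidableEq V] (G : SimpleGraph V)
    [DecidableRel G.Adj] (r : ℕ) (hodd : Odd r) (hr : 9 ≤ r)
    (hreg : G.IsRegularOfDegree r) :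
    ∃ f : Sym2 V → ℤ,
      (∀ e ∈ G.edgeFinset, f e ≠ 0 ∧ (f e).natAbs ≤ 4) ∧
      (∀ v : V, ∑ e ∈ G.incidenceFinset v, f e = 0) := by
  classical
  have hfib : ∀ v, (univ.filter (fun a : G.Dart => a.fst = v)).card = r := by
    intro v
    rw [G.dart_fst_fiber_card_eq_degree v, hreg v]
  rcases isEmpty_or_nonempty V with hV | ⟨⟨v0⟩⟩
  · refine ⟨fun _ => 1, fun _ _ => by simp, fun v => (hV.false v).elim⟩
  obtain ⟨a0, -⟩ : (univ.filter (fun a : G.Dart => a.fst = v0)).Nonempty := by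
    rw [← Finset.card_pos, hfib]; omega
  obtain ⟨F, ⟨hF1, hF2, -, hF4⟩, -⟩ := zs_main (fun a : G.Dart => a.fst) r hodd hr hfib _
    (fun a => a.symm) (fun a => a.symm_symm) rfl a0 1 (Or.inl rfl)
  let f : Sym2 V → ℤ := fun e => if h : ∃ d : G.Dart, d.edge = e then F h.choose else 0
  have hf : ∀ d : G.Dart, f d.edge = F d := by
    intro d
    have h : ∃ d' : G.Dart, d'.edge = d.edge := ⟨d, rfl⟩
    simp only [f, dif_pos h]
    rcases (dart_edge_eq_iff _ _).1 h.choose_spec with h' | h'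
    · rw [h']
    · rw [h']; exact hF1 d
  refine ⟨f, ?_, ?_⟩
  · intro e he
    rw [mem_edgeFinset] at he
    induction e with
    | _ x y =>
      have := hF2 ⟨(x, y), he⟩
      rw [← hf] at this
      exact this
  · intro v
    rw [← hF4 v]
    symm
    apply Finset.sum_bij (fun d _ => d.edge)
    · intro d hd
      simp only [mem_filter, mem_univ, true_and] at hd
      rw [mem_incidenceFinset]
      refine ⟨d.edge_mem, ?_⟩
      rw [← hd]
      exact Sym2.mem_mk_left _ _
    · intro d hd d' hd' h
      simp only [mem_filter, mem_univ, true_and] at hd hd'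
      rcases (dart_edge_eq_iff _ _).1 h with h' | h'
      · exact h'
      · exfalso
        rw [h'] at hd
        exact d'.snd_ne_fst (hd.trans hd'.symm)
    · intro e he
      rw [mem_incidenceFinset] at he
      obtain ⟨he1, he2⟩ := he
      obtain ⟨w, rfl⟩ := he2
      exact ⟨⟨(v, w), he1⟩, by simp, rfl⟩
    · intro d _
      exact (hf d).symm
end

section
/- Let r ≥ 3 be an integer with r ≠ 5. Then every r-regular graph admits a zero-sum 5-flow. -/
open Finset SimpleGraph

lemma tutte_weighted {W : Type*} [Fintype W] [DecidableEq W] (Γ : SimpleGraph W)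
    (y : W → W → ℕ) (r : ℕ) (hr : 0 < r) (heven : Even (Fintype.card W))
    (hy : ∀ a b, y a b ≠ 0 → Γ.Adj a b) (hcol : ∀ b, ∑ a, y a b ≤ r)
    (B : Set W) (hB : ∀ a ∈ B, ∀ b ∈ B, a ≠ b → Γ.Adj a b)
    (hK : ∀ K : Finset W, Odd (#K) → (∀ a ∈ K, a ∉ B) → r ≤ ∑ a ∈ K, ∑ b ∈ Kᶜ, y a b) :
    ∃ M : Γ.Subgraph, M.IsPerfectMatching := by
  classical
  rw [SimpleGraph.tutte]
  intro U hU
  unfold IsTutteViolator at hU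
  set H := ((⊤ : Γ.Subgraph).deleteVerts U).coe with hH
  have hmem : ∀ x : W, x ∈ ((⊤ : Γ.Subgraph).deleteVerts U).verts ↔ x ∉ U := by intro x; simp
  let Kf : H.ConnectedComponent → Finset W := fun c => univ.filter (fun x => ∃ h : x ∈ ((⊤ : Γ.Subgraph).deleteVerts U).verts, (⟨x, h⟩ : ((⊤ : Γ.Subgraph).deleteVerts U).verts) ∈ c.supp)
  have hKcard : ∀ c, #(Kf c) = c.supp.ncard := by
    intro c
    rw [← Set.ncard_image_of_injective _ Subtype.val_injective, ← Set.ncard_coe_finset]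
    congr 1
    ext x
    simp [Kf]
  -- parity
  have hpar : Odd H.oddComponents.ncard ↔ Odd U.ncard := by
    rw [SimpleGraph.odd_ncard_oddComponents]
    have h1 : Nat.card ((⊤ : Γ.Subgraph).deleteVerts U).verts + U.ncard = Fintype.card W := by
      rw [Nat.card_coe_set_eq]
      have : ((⊤ : Γ.Subgraph).deleteVerts U).verts = Uᶜ := by ext x; simp
      rw [this, add_comm, Set.ncard_add_ncard_compl, Nat.card_eq_fintype_card]
    rw [← h1, Nat.even_add] at heven
    rw [← Nat.not_even_iff_odd, ← Nat.not_even_iff_odd, heven]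
  have hU2 : U.ncard + 2 ≤ H.oddComponents.ncard := by
    rcases Nat.lt_or_ge (U.ncard + 1) H.oddComponents.ncard with h | h
    · exact h
    · have : H.oddComponents.ncard = U.ncard + 1 := by omega
      rw [this] at hpar
      grind
  have hdisj : ∀ c c', c ≠ c' → Disjoint (Kf c) (Kf c') := by
    intro c c' hcc
    rw [Finset.disjoint_left]
    intro x hx hx'
    simp only [Kf, mem_filter, mem_univ, true_and, ConnectedComponent.mem_supp_iff] at hx hx'
    obtain ⟨h, hx⟩ := hx
    obtain ⟨h', hx'⟩ := hx'
    exact hcc (hx.symm.trans hx')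
  have hnb : ∀ c, ∀ a ∈ Kf c, ∀ b, b ∉ U → Γ.Adj a b → b ∈ Kf c := by
    intro c a ha b hb hab
    simp only [Kf, mem_filter, mem_univ, true_and, ConnectedComponent.mem_supp_iff] at ha ⊢
    obtain ⟨h, ha⟩ := ha
    refine ⟨(hmem b).2 hb, ?_⟩
    rw [← ha]
    apply ConnectedComponent.sound
    apply Adj.reachable
    rw [hH, Subgraph.coe_adj]
    simp only [Subgraph.deleteVerts_adj, Subgraph.verts_top, Set.mem_univ, true_and, Subgraph.top_adj]
    exact ⟨hb, (hmem a).1 h, hab.symm⟩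
  let O : Finset H.ConnectedComponent := univ.filter (fun c => Odd c.supp.ncard)
  have hO : #O = H.oddComponents.ncard := by
    rw [← Set.ncard_coe_finset]; congr 1; ext c; simp [O]
  let O' := O.filter (fun c => ∀ a ∈ Kf c, a ∉ B)
  have hbad : #(O.filter (fun c => ¬ ∀ a ∈ Kf c, a ∉ B)) ≤ 1 := by
    rw [Finset.card_le_one]
    intro c hc c' hc'
    simp only [mem_filter, not_forall, not_not] at hc hc'
    obtain ⟨-, a, ha, haB⟩ := hc
    obtain ⟨-, b, hb, hbB⟩ := hc'
    by_contra hne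
    have hd := hdisj c c' hne
    have hab : a ≠ b := by
      rintro rfl; exact (Finset.disjoint_left.1 hd ha) hb
    have hbU : b ∉ U := by
      simp only [Kf, mem_filter] at hb
      exact (hmem b).1 hb.2.1
    have := hnb c a ha b hbU (hB a haB b hbB hab)
    exact (Finset.disjoint_left.1 hd this) hb
  have hO' : #O ≤ #O' + 1 := by
    have := Finset.card_filter_add_card_filter_not (s := O) (fun c => ∀ a ∈ Kf c, a ∉ B)
    simp only [O'] 
    omega
  have hsum : r * #O' ≤ r * U.ncard := by
    calc r * #O' = ∑ c ∈ O', r := by simp [mul_comm]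
      _ ≤ ∑ c ∈ O', ∑ a ∈ Kf c, ∑ b ∈ (Kf c)ᶜ, y a b := by
        apply Finset.sum_le_sum
        intro c hc
        simp only [O', O, mem_filter, mem_univ, true_and] at hc
        exact hK _ (by rw [hKcard]; exact hc.1) hc.2
      _ ≤ ∑ c ∈ O', ∑ a ∈ Kf c, ∑ b ∈ U.toFinset, y a b := by
        apply Finset.sum_le_sum
        intro c hc
        apply Finset.sum_le_sum
        intro a ha
        apply Finset.sum_le_sum_of_ne_zero
        intro b hb hy0
        by_contra hbU
        simp only [Set.mem_toFinset] at hbU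
        exact (Finset.mem_compl.1 hb) (hnb c a ha b hbU (hy a b hy0))
      _ = ∑ a ∈ O'.biUnion Kf, ∑ b ∈ U.toFinset, y a b := by
        rw [Finset.sum_biUnion]
        intro c _ c' _ h
        exact hdisj c c' h
      _ ≤ ∑ a, ∑ b ∈ U.toFinset, y a b := by
        apply Finset.sum_le_sum_of_subset
        exact subset_univ _
      _ = ∑ b ∈ U.toFinset, ∑ a, y a b := Finset.sum_comm
      _ ≤ ∑ b ∈ U.toFinset, r := Finset.sum_le_sum (fun b _ => hcol b)
      _ = r * U.ncard := by
        rw [Finset.sum_const, Set.ncard_eq_toFinset_card']; simp [mul_comm]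
  have := Nat.le_of_mul_le_mul_left hsum hr
  omega

lemma color_lemma {V D : Type*} [Fintype V] [DecidableEq V] [DecidableEq D] (t h : D → V) (n : ℕ) :
    ∀ s : Finset D, (∀ v, #(s.filter (fun d => t d = v)) = n) →
      (∀ v, #(s.filter (fun d => h d = v)) = n) →
    ∃ c : D → ℕ, (∀ d ∈ s, c d < n) ∧ ∀ (α : ℕ → ℤ) (v : V),
      ∑ d ∈ s with t d = v, α (c d) = ∑ i ∈ range n, α i ∧
      ∑ d ∈ s with h d = v, α (c d) = ∑ i ∈ range n, α i := by
  induction n with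
  | zero =>
    intro s ht hh
    have hs : s = ∅ := by
      apply Finset.eq_empty_of_forall_notMem
      intro d hd
      have := ht (t d)
      rw [Finset.card_eq_zero] at this
      have h2 : d ∈ s.filter (fun d' => t d' = t d) := by simp [hd]
      rw [this] at h2
      simp at h2
    subst hs
    exact ⟨fun _ => 0, by simp, by simp⟩
  | succ n ih =>
    intro s ht hh
    have hall := (Finset.all_card_le_biUnion_card_iff_exists_injective
      (fun v : V => (s.filter (fun d => t d = v)).image h)).1 (by
      intro A
      have h1 : #(s.filter (fun d => t d ∈ A)) = #A * (n + 1) := by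
        rw [Finset.card_eq_sum_card_fiberwise (f := t) (t := A)]
        · rw [Finset.sum_congr rfl (g := fun _ => n + 1)]
          · simp
          · intro v hv
            rw [← ht v]; congr 1; ext d; simp; grind
        · intro d hd; simp at hd; simpa using hd.2
      have h2 : #(s.filter (fun d => t d ∈ A)) ≤ #(A.biUnion (fun v : V => (s.filter (fun d => t d = v)).image h)) * (n+1) := by
        rw [Finset.card_eq_sum_card_fiberwise (f := h) (t := A.biUnion (fun v : V => (s.filter (fun d => t d = v)).image h))]
        · rw [← smul_eq_mul]
          apply Finset.sum_le_card_nsmul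
          intro v hv
          rw [← hh v]
          apply Finset.card_le_card
          intro d; simp; grind
        · intro d hd; simp at hd ⊢; exact ⟨d, by tauto⟩
      rw [h1] at h2
      exact Nat.le_of_mul_le_mul_right h2 (Nat.succ_pos n))
    obtain ⟨σ, hσ, hσ2⟩ := hall
    have hσ3 : ∀ v, ∃ d, d ∈ s ∧ t d = v ∧ h d = σ v := by
      intro v
      have := hσ2 v
      simp at this
      grind
    choose p hps hpt hph using hσ3
    have hσs : Function.Surjective σ := Finite.surjective_of_injective hσ
    let P := univ.image p
    have hP : ∀ d, d ∈ P ↔ ∃ v, p v = d := by simp [P]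
    have hPs : P ⊆ s := by
      intro d hd; obtain ⟨v, rfl⟩ := (hP d).1 hd; exact hps v
    have hPt : ∀ v, P.filter (fun d => t d = v) = {p v} := by
      intro v; ext d; simp only [mem_filter, hP, mem_singleton]
      constructor
      · rintro ⟨⟨w, rfl⟩, h⟩; rw [hpt] at h; rw [h]
      · rintro rfl; exact ⟨⟨v, rfl⟩, hpt v⟩
    have hPh : ∀ v, P.filter (fun d => h d = σ v) = {p v} := by
      intro v; ext d; simp only [mem_filter, hP, mem_singleton]
      constructor
      · rintro ⟨⟨w, rfl⟩, h⟩; rw [hph] at h; rw [hσ h]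
      · rintro rfl; exact ⟨⟨v, rfl⟩, hph v⟩
    have hsplit : ∀ (q : D → Prop) [DecidablePred q], (s.filter q) = (s \ P).filter q ∪ P.filter q ∧ Disjoint ((s \ P).filter q) (P.filter q) := by
      intro q _
      constructor
      · ext d; have := @hPs d; simp; tauto
      · rw [Finset.disjoint_left]; intro d; simp; tauto
    obtain ⟨c, hc, hc2⟩ := ih (s \ P) (by
      intro v
      have h1 := ht v
      have h2 := hsplit (fun d => t d = v)
      rw [h2.1, Finset.card_union_of_disjoint h2.2, hPt] at h1
      simpa using h1) (by
      intro w
      obtain ⟨v, rfl⟩ := hσs w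
      have h1 := hh (σ v)
      have h2 := hsplit (fun d => h d = σ v)
      rw [h2.1, Finset.card_union_of_disjoint h2.2, hPh] at h1
      simpa using h1)
    have hrest : ∀ (q : D → Prop) [DecidablePred q] (α : ℕ → ℤ), ∑ d ∈ (s \ P) with q d, α (if d ∈ P then n else c d) = ∑ d ∈ (s \ P) with q d, α (c d) := by
      intro q _ α
      apply Finset.sum_congr rfl
      intro d hd
      simp only [mem_filter, mem_sdiff] at hd
      rw [if_neg hd.1.2]
    refine ⟨fun d => if d ∈ P then n else c d, ?_, ?_⟩
    · intro d hd
      by_cases h : d ∈ P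
      · simp [h]
      · simp only [h, if_false]; have := hc d (by simp [hd, h]); omega
    · intro α v
      constructor
      · have h2 := hsplit (fun d => t d = v)
        rw [h2.1, Finset.sum_union h2.2, hrest, (hc2 α v).1, hPt, Finset.sum_range_succ]
        have : p v ∈ P := (hP _).2 ⟨v, rfl⟩
        simp [this]
      · obtain ⟨v, rfl⟩ := hσs v
        have h2 := hsplit (fun d => h d = σ v)
        rw [h2.1, Finset.sum_union h2.2, hrest, (hc2 α _).2, hPh, Finset.sum_range_succ]
        have : p v ∈ P := (hP _).2 ⟨v, rfl⟩
        simp [this]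

/-- weights -/
lemma weights_aux (n a i0 : ℕ) (m : ℤ) (ha : 0 < a) (han : a < n) (hi : i0 < n) (hm : m = 1 ∨ m = 2) :
    ∃ α : ℕ → ℤ, (∀ i, α i = 2 ∨ α i = -1) ∧ |α i0| = m ∧ ∑ i ∈ range n, α i = 3 * a - n := by
  have key : ∃ T : Finset ℕ, T ⊆ range n ∧ #T = a ∧ (i0 ∈ T ↔ m = 2) := by
    rcases hm with rfl | rfl
    · obtain ⟨T, hT, hTc⟩ := Finset.exists_subset_card_eq (s := (range n).erase i0) (n := a) (by
        rw [Finset.card_erase_of_mem (by simpa using hi)]; simp; omega)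
      refine ⟨T, hT.trans (Finset.erase_subset _ _), hTc, ?_⟩
      constructor
      · intro h; have := hT h; simp at this
      · intro h; norm_num at h
    · obtain ⟨T, h1, h2, h3⟩ := Finset.exists_subsuperset_card_eq (s := {i0}) (t := range n) (n := a) (by simpa using hi) (by rw [Finset.card_singleton]; exact ha) (by simpa using han.le)
      exact ⟨T, h2, h3, by simpa using h1⟩
  obtain ⟨T, hT, hTc, hTi⟩ := key
  refine ⟨fun i => if i ∈ T then 2 else -1, ?_, ?_, ?_⟩
  · intro i; by_cases h : i ∈ T <;> simp [h]
  · by_cases h : i0 ∈ T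
    · simp [h, hTi.1 h]
    · have : m = 1 := by rcases hm with h' | h'; exact h'; exact absurd (hTi.2 h') h
      simp [h, this]
  · have : ∀ i, (if i ∈ T then (2:ℤ) else -1) = 3 * (if i ∈ T then 1 else 0) - 1 := by
      intro i; split_ifs <;> norm_num
    simp_rw [this]
    rw [Finset.sum_sub_distrib, ← Finset.mul_sum, Finset.sum_ite_mem, Finset.inter_eq_right.2 hT]
    simp [hTc]

def GoodW (α : ℕ → ℤ) : Prop :=
  (∀ i, |α i| = 1 ∨ |α i| = 2) ∧ ∀ i j, α i + α j ≠ 0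

lemma goodW_of (α : ℕ → ℤ) (h : ∀ i, α i = 2 ∨ α i = -1) : GoodW α := by
  constructor
  · intro i; rcases h i with h | h <;> simp [h]
  · intro i j; rcases h i with h1 | h1 <;> rcases h j with h2 | h2 <;> simp [h1, h2]

lemma goodW_neg (α : ℕ → ℤ) (h : GoodW α) : GoodW (fun i => - α i) := by
  constructor
  · intro i; simpa using h.1 i
  · intro i j; have := h.2 i j; simp only []; omega

lemma weights (n i0 j0 : ℕ) (m : ℤ) (hn : 2 ≤ n) (hn3 : n ≠ 3) (hi : i0 < n) (hj : j0 < 2) (hm : m = 1 ∨ m = 2) :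
    ∃ α β : ℕ → ℤ, GoodW α ∧ GoodW β ∧ |α i0| = m ∧ |β j0| = m ∧
      ∑ i ∈ range n, α i + ∑ i ∈ range 2, β i = 0 := by
  have hcases : n % 3 = 0 ∨ n % 3 = 1 ∨ n % 3 = 2 := by omega
  rcases hcases with h | h | h
  · obtain ⟨α, h1, h2, h3⟩ := weights_aux n (n / 3 - 1) i0 m (by omega) (by omega) hi hm
    have : ∃ β : ℕ → ℤ, GoodW β ∧ |β j0| = m ∧ ∑ i ∈ range 2, β i = 3 := by
      refine ⟨fun j => if j = j0 then m else 3 - m, ⟨?_, ?_⟩, ?_, ?_⟩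
      · intro i; rcases hm with rfl | rfl <;> by_cases h : i = j0 <;> simp [h]
      · intro i j; simp only []; split_ifs <;> omega
      · rcases hm with rfl | rfl <;> simp
      · rw [Finset.sum_range_succ, Finset.sum_range_one]
        split_ifs <;> omega
    obtain ⟨β, hb, hb1, hb2⟩ := this
    refine ⟨α, β, goodW_of _ h1, hb, h2, hb1, ?_⟩
    rw [h3, hb2]; omega
  · obtain ⟨α, h1, h2, h3⟩ := weights_aux n (n / 3) i0 m (by omega) (by omega) hi hm
    obtain ⟨β, k1, k2, k3⟩ := weights_aux 2 1 j0 m (by omega) (by omega) hj hm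
    refine ⟨α, β, goodW_of _ h1, goodW_of _ k1, h2, k2, ?_⟩
    rw [h3, k3]; omega
  · obtain ⟨α, h1, h2, h3⟩ := weights_aux n (n / 3 + 1) i0 m (by omega) (by omega) hi hm
    obtain ⟨β, k1, k2, k3⟩ := weights_aux 2 1 j0 m (by omega) (by omega) hj hm
    refine ⟨fun i => - α i, β, goodW_neg _ (goodW_of _ h1), goodW_of _ k1, by simpa using h2, k2, ?_⟩
    rw [Finset.sum_neg_distrib, h3, k3]; omega

/-- gadget weights -/
def gadW {V : Type*} [DecidableEq V] (G : SimpleGraph V) (Br : Sym2 V → Prop) [DecidablePred Br] (m : ℕ) :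
    (G.Dart ⊕ (V × Fin m)) → (G.Dart ⊕ (V × Fin m)) → ℕ
  | Sum.inl d, Sum.inl d' => if d' = d.symm ∧ ¬ Br d.edge then 2 else 0
  | Sum.inl d, Sum.inr p => if d.fst = p.1 then 1 else 0
  | Sum.inr p, Sum.inl d => if d.fst = p.1 then (if Br d.edge ∧ p.2.val = 0 then 3 else 1) else 0
  | Sum.inr _, Sum.inr _ => 0

/-- gadget graph -/
def gadG {V : Type*} [DecidableEq V] (G : SimpleGraph V) (Br : Sym2 V → Prop) (m : ℕ) :
    SimpleGraph (G.Dart ⊕ (V × Fin m)) where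
  Adj a b := match a, b with
  | Sum.inl d, Sum.inl d' => (d' = d.symm ∧ ¬ Br d.edge) ∨ (d ≠ d' ∧ Br d.edge ∧ Br d'.edge)
  | Sum.inl d, Sum.inr p => d.fst = p.1
  | Sum.inr p, Sum.inl d => d.fst = p.1
  | Sum.inr _, Sum.inr _ => False
  symm := ⟨by
    rintro (d | p) (d' | p') h
    · rcases h with ⟨rfl, h⟩ | ⟨h1, h2, h3⟩
      · left; simp [h]
      · right; exact ⟨h1.symm, h3, h2⟩
    · exact h
    · exact h
    · exact h⟩
  loopless := ⟨by
    rintro (d | p) h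
    · rcases h with ⟨h1, h⟩ | ⟨h1, h2, h3⟩
      · exact d.symm_ne h1.symm
      · exact h1 rfl
    · exact h⟩

section
variable {V : Type*} [Fintype V] [DecidableEq V] (G : SimpleGraph V)
    [DecidableRel G.Adj] (m : ℕ)

lemma gad_col (Br : Sym2 V → Prop) [DecidablePred Br] (hm : 0 < m) (hreg : G.IsRegularOfDegree (m + 2)) (b : G.Dart ⊕ (V × Fin m)) :
    ∑ a, gadW G Br m a b ≤ m + 2 := by
  rw [Fintype.sum_sum_type]
  rcases b with d | p
  · have h2 : ∑ p : V × Fin m, gadW G Br m (Sum.inr p) (Sum.inl d) = m + (if Br d.edge then 2 else 0) := by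
      rw [Fintype.sum_prod_type, Finset.sum_eq_single d.fst]
      · simp only [gadW, if_true]
        obtain ⟨k, rfl⟩ : ∃ k, m = k + 1 := ⟨m - 1, by omega⟩
        rw [Fin.sum_univ_succ]
        by_cases h : Br d.edge <;> simp [h] <;> omega
      · intro v _ hv; simp [gadW, hv.symm]
      · simp
    have h1 : ∑ d' : G.Dart, gadW G Br m (Sum.inl d') (Sum.inl d) = (if Br d.edge then 0 else 2) := by
      rw [Finset.sum_eq_single d.symm]
      · by_cases h : Br d.edge <;> simp [gadW, h]
      · intro d' _ hd
        simp only [gadW]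
        rw [if_neg]
        rintro ⟨rfl, _⟩
        simp at hd
      · simp
    rw [h1, h2]; split_ifs <;> omega
  · have h1 : ∑ d' : G.Dart, gadW G Br m (Sum.inl d') (Sum.inr p) = m + 2 := by
      simp only [gadW]
      rw [Finset.sum_boole, G.dart_fst_fiber_card_eq_degree, hreg p.1]; simp
    rw [h1]; simp [gadW]

set_option maxHeartbeats 1000000 in
lemma gad_cut (Br : Sym2 V → Prop) [DecidablePred Br] (hBr : ∀ e, Br e ↔ G.IsBridge e) (hm : 0 < m) (hreg : G.IsRegularOfDegree (m + 2))
    (K : Finset (G.Dart ⊕ (V × Fin m))) (hodd : Odd (#K))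
    (hKB : ∀ d : G.Dart, Br d.edge → Sum.inl d ∉ K) :
    m + 2 ≤ ∑ a ∈ K, ∑ b ∈ Kᶜ, gadW G Br m a b := by
  classical
  -- indicator form
  set X := ∑ a ∈ K, ∑ b ∈ Kᶜ, gadW G Br m a b with hX
  have hXle : ∀ S : Finset ((G.Dart ⊕ (V × Fin m)) × (G.Dart ⊕ (V × Fin m))),
      (∀ q ∈ S, q.1 ∈ K ∧ q.2 ∉ K) → ∑ q ∈ S, gadW G Br m q.1 q.2 ≤ X := by
    intro S hS
    rw [hX, ← Finset.sum_product']
    apply Finset.sum_le_sum_of_subset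
    intro q hq
    simp [hS q hq]
  by_cases hpart : ∃ v, ∃ i j : Fin m, Sum.inr (v, i) ∈ K ∧ Sum.inr (v, j) ∉ K
  · obtain ⟨v, i, j, hi, hj⟩ := hpart
    let g : G.Dart → (G.Dart ⊕ (V × Fin m)) × (G.Dart ⊕ (V × Fin m)) := fun d =>
      if Sum.inl d ∈ K then (Sum.inl d, Sum.inr (v, j)) else (Sum.inr (v, i), Sum.inl d)
    have hg : Function.Injective g := by
      intro d d' h
      simp only [g] at h
      split_ifs at h <;> simp_all
    have := hXle ((univ.filter (fun d : G.Dart => d.fst = v)).image g) (by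
      intro q hq
      simp only [mem_image, mem_filter, mem_univ, true_and] at hq
      obtain ⟨d, hd, rfl⟩ := hq
      simp only [g]
      split_ifs with h
      · exact ⟨h, hj⟩
      · exact ⟨hi, h⟩)
    refine le_trans ?_ this
    rw [Finset.sum_image (fun _ _ _ _ h => hg h)]
    have hc : #(univ.filter (fun d : G.Dart => d.fst = v)) = m + 2 := by
      rw [G.dart_fst_fiber_card_eq_degree, hreg v]
    calc m + 2 = ∑ d ∈ univ.filter (fun d : G.Dart => d.fst = v), 1 := by rw [← hc]; simp
      _ ≤ _ := by
        apply Finset.sum_le_sum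
        intro d hd
        simp only [mem_filter, mem_univ, true_and] at hd
        simp only [g]
        split_ifs with h
        · simp [gadW, hd]
        · simp only [gadW, hd, if_true]; split_ifs <;> omega
  · push Not at hpart
    let z : Fin m := ⟨0, hm⟩
    let A : V → Prop := fun v => Sum.inr (v, z) ∈ K
    have hA : ∀ v i, Sum.inr (v, i) ∈ K ↔ A v := fun v i => ⟨hpart v i z, hpart v z i⟩
    let Dev : Finset G.Dart := univ.filter (fun d => ¬ (Sum.inl d ∈ K ↔ A d.fst))
    have hDev : ∀ d, d ∈ Dev ↔ ¬ (Sum.inl d ∈ K ↔ A d.fst) := by simp [Dev]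
    -- parity
    have hpar : Odd #Dev := by
      have h1 : #K = #(univ.filter (fun d : G.Dart => Sum.inl d ∈ K)) + #(univ.filter (fun p : V × Fin m => (Sum.inr p : G.Dart ⊕ (V × Fin m)) ∈ K)) := by
        have : K = (univ.filter (fun d : G.Dart => Sum.inl d ∈ K)).disjSum (univ.filter (fun p : V × Fin m => (Sum.inr p : G.Dart ⊕ (V × Fin m)) ∈ K)) := by
          ext x; rcases x with d | p <;> simp
        conv_lhs => rw [this]
        rw [Finset.card_disjSum]
      have h2 : #(univ.filter (fun p : V × Fin m => (Sum.inr p : G.Dart ⊕ (V × Fin m)) ∈ K)) = #(univ.filter A) * m := by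
        have : (univ.filter (fun p : V × Fin m => (Sum.inr p : G.Dart ⊕ (V × Fin m)) ∈ K)) = (univ.filter A) ×ˢ univ := by
          ext ⟨v, i⟩; simp [hA]
        rw [this, Finset.card_product]; simp
      have h3 : #(univ.filter (fun d : G.Dart => A d.fst)) = #(univ.filter A) * (m + 2) := by
        rw [Finset.card_eq_sum_card_fiberwise (f := fun d : G.Dart => d.fst) (t := univ.filter A)]
        · rw [Finset.sum_congr rfl (g := fun _ => m + 2)]
          · simp
          · intro v hv
            rw [← hreg v, ← G.dart_fst_fiber_card_eq_degree]; congr 1; ext d; simp at hv ⊢; grind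
        · intro d hd; simpa using hd
      have h4 : ∀ (p q : G.Dart → Prop) [DecidablePred p] [DecidablePred q], #(univ.filter (fun d => ¬ (p d ↔ q d))) + 2 * #(univ.filter (fun d => p d ∧ q d)) = #(univ.filter p) + #(univ.filter q) := by
        intro p q _ _
        simp only [Finset.card_filter]
        rw [Finset.mul_sum, ← Finset.sum_add_distrib, ← Finset.sum_add_distrib]
        apply Finset.sum_congr rfl
        intro d _
        by_cases hp : p d <;> by_cases hq : q d <;> simp [hp, hq]
      have h5 := h4 (fun d => Sum.inl d ∈ K) (fun d => A d.fst)
      have h6 : #Dev + 2 * #(univ.filter (fun d : G.Dart => Sum.inl d ∈ K ∧ A d.fst)) = #(univ.filter (fun d : G.Dart => Sum.inl d ∈ K)) + #(univ.filter (fun d : G.Dart => A d.fst)) := by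
        convert h5 using 2
      rw [h3] at h6
      rw [h1, h2] at hodd
      have h7 : #(univ.filter A) * (m + 2) = #(univ.filter A) * m + 2 * #(univ.filter A) := by ring
      rw [h7] at h6
      generalize #(univ.filter A) * m = t at *
      rw [Nat.odd_iff] at hodd ⊢
      omega
    -- core-port cuts
    let g : G.Dart × Fin m → (G.Dart ⊕ (V × Fin m)) × (G.Dart ⊕ (V × Fin m)) := fun q =>
      if Sum.inl q.1 ∈ K then (Sum.inl q.1, Sum.inr (q.1.fst, q.2)) else (Sum.inr (q.1.fst, q.2), Sum.inl q.1)
    have hg : Function.Injective g := by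
      rintro ⟨d, i⟩ ⟨d', i'⟩ h
      simp only [g] at h
      split_ifs at h
      · simp only [Prod.mk.injEq, Sum.inl.injEq, Sum.inr.injEq] at h
        rw [h.1, h.2.2]
      · simp at h
      · simp at h
      · simp only [Prod.mk.injEq, Sum.inl.injEq, Sum.inr.injEq] at h
        rw [h.2, h.1.2]
    have hgK : ∀ q ∈ (Dev ×ˢ (univ : Finset (Fin m))).image g, q.1 ∈ K ∧ q.2 ∉ K := by
      intro q hq
      simp only [mem_image, mem_product, mem_univ, and_true] at hq
      obtain ⟨⟨d, i⟩, hd, rfl⟩ := hq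
      rw [hDev] at hd
      simp only [g]
      split_ifs with h
      · refine ⟨h, ?_⟩
        rw [hA]; tauto
      · refine ⟨?_, h⟩
        rw [hA]; tauto
    have hg1 : ∀ q : G.Dart × Fin m, 1 ≤ gadW G Br m (g q).1 (g q).2 := by
      rintro ⟨d, i⟩
      simp only [g]
      split_ifs with h
      · simp [gadW]
      · simp only [gadW, if_true]; split_ifs <;> omega
    have hcount : #Dev * m ≤ ∑ q ∈ (Dev ×ˢ (univ : Finset (Fin m))).image g, gadW G Br m q.1 q.2 := by
      rw [Finset.sum_image (fun _ _ _ _ h => hg h)]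
      calc #Dev * m = ∑ q ∈ Dev ×ˢ (univ : Finset (Fin m)), 1 := by simp
        _ ≤ _ := Finset.sum_le_sum (fun q _ => hg1 q)
    by_cases h3 : 3 ≤ #Dev
    · have := hXle _ hgK
      nlinarith
    have hDev1 : #Dev = 1 := by
      rw [Nat.odd_iff] at hpar; omega
    obtain ⟨d0, hd0⟩ := Finset.card_eq_one.1 hDev1
    have hdev : ∀ d, d ≠ d0 → (Sum.inl d ∈ K ↔ A d.fst) := by
      intro d hd
      by_contra h
      have := (hDev d).2 h
      rw [hd0] at this
      simp at this; exact hd this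
    have hdev0 : ¬ (Sum.inl d0 ∈ K ↔ A d0.fst) := by
      rw [← hDev, hd0]; simp
    by_cases hb : Br d0.edge
    · have hnK := hKB d0 hb
      have := hXle _ hgK
      refine le_trans ?_ this
      rw [Finset.sum_image (fun _ _ _ _ h => hg h), hd0, Finset.sum_product, Finset.sum_singleton]
      obtain ⟨k, rfl⟩ : ∃ k, m = k + 1 := ⟨m - 1, by omega⟩
      rw [Fin.sum_univ_succ]
      have e0 : gadW G Br (k+1) (g (d0, 0)).1 (g (d0, 0)).2 = 3 := by
        simp [g, hnK, gadW, hb]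
      have e1 : k ≤ ∑ i : Fin k, gadW G Br (k+1) (g (d0, i.succ)).1 (g (d0, i.succ)).2 := by
        calc k = ∑ i : Fin k, 1 := by simp
          _ ≤ _ := Finset.sum_le_sum (fun i _ => hg1 _)
      rw [e0]; omega
    · by_cases hsep : ∃ d : G.Dart, ¬ Br d.edge ∧ Sum.inl d ∈ K ∧ Sum.inl d.symm ∉ K
      · obtain ⟨d, hdb, hd1, hd2⟩ := hsep
        have := hXle (insert (Sum.inl d, Sum.inl d.symm) ((Dev ×ˢ (univ : Finset (Fin m))).image g)) (by
          intro q hq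
          rcases Finset.mem_insert.1 hq with rfl | hq
          · exact ⟨hd1, hd2⟩
          · exact hgK q hq)
        refine le_trans ?_ this
        rw [Finset.sum_insert]
        · rw [hDev1, one_mul] at hcount
          have : gadW G Br m (Sum.inl d) (Sum.inl d.symm) = 2 := by simp [gadW, hdb]
          simp only [this]; omega
        · simp only [mem_image, not_exists, not_and]
          intro q _ h
          simp only [g] at h
          split_ifs at h <;> simp at h
      · exfalso
        push Not at hsep
        have hs : ∀ d : G.Dart, ¬ Br d.edge → (Sum.inl d ∈ K ↔ Sum.inl d.symm ∈ K) := by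
          intro d hd
          refine ⟨hsep d hd, fun h => ?_⟩
          have := hsep d.symm (by simpa using hd) h
          simpa using this
        have hcross : ¬ (A d0.fst ↔ A d0.snd) := by
          have h1 := hdev d0.symm d0.symm_ne
          have h2 := hs d0 hb
          have : d0.symm.fst = d0.snd := rfl
          rw [this] at h1
          tauto
        have hother : ∀ d : G.Dart, d ≠ d0 → d ≠ d0.symm → (A d.fst ↔ A d.snd) := by
          intro d h1 h2
          have h3 := hdev d h1
          have h4 := hdev d.symm (by rintro rfl; simp at h2)
          have h5 : d.symm.fst = d.snd := rfl
          rw [h5] at h4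
          by_cases hbd : Br d.edge
          · have := hKB d hbd
            have := hKB d.symm (by simpa using hbd)
            tauto
          · have := hs d hbd
            tauto
        apply hb
        rw [hBr]
        show G.IsBridge s(d0.fst, d0.snd)
        rw [SimpleGraph.isBridge_iff]
        rintro ⟨w⟩
        apply hcross
        have : ∀ x y (w : (G.deleteEdges {s(d0.fst, d0.snd)}).Walk x y), (A x ↔ A y) := by
          intro x y w
          induction w with
          | nil => rfl
          | cons h p ih =>
            rw [← ih]
            rw [SimpleGraph.deleteEdges_adj] at h
            refine hother ⟨(_, _), h.1⟩ ?_ ?_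
            · intro hh; exact h.2 (congrArg Dart.edge hh)
            · intro hh
              apply h.2
              have := congrArg Dart.edge hh
              rw [Dart.edge_symm] at this
              exact this
        exact this _ _ w

end

section
variable {V : Type*} [Fintype V] [DecidableEq V] (G : SimpleGraph V)
    [DecidableRel G.Adj]

lemma exists_half_factor (m : ℕ) (hm : 0 < m) (hreg : G.IsRegularOfDegree (m + 2)) :
    ∃ s : Finset G.Dart, (∀ v, #(s.filter (fun d => d.fst = v)) = 2) ∧
      ∀ d : G.Dart, ¬ G.IsBridge d.edge → (d ∈ s ↔ d.symm ∈ s) := by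
  classical
  obtain ⟨M, hM⟩ := tutte_weighted (gadG G G.IsBridge m) (gadW G G.IsBridge m) (m + 2) (by omega)
    (by
      rw [Fintype.card_sum, G.dart_card_eq_sum_degrees, Fintype.card_prod, Fintype.card_fin,
        Finset.sum_congr rfl (fun v _ => hreg v)]
      simp only [sum_const, card_univ, smul_eq_mul]
      exact ⟨Fintype.card V * (m + 1), by ring⟩)
    (by
      rintro (d | p) (d' | p') h
      · simp only [gadW] at h; left
        by_contra h'; simp [h'] at h
      · simp only [gadW] at h
        by_contra h'
        exact h (if_neg h')
      · simp only [gadW] at h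
        by_contra h'
        exact h (if_neg h')
      · exact absurd rfl h)
    (gad_col G m G.IsBridge hm hreg)
    {a | ∃ d : G.Dart, a = Sum.inl d ∧ G.IsBridge d.edge}
    (by
      rintro _ ⟨d, rfl, hd⟩ _ ⟨d', rfl, hd'⟩ h
      right
      exact ⟨fun h' => h (by rw [h']), hd, hd'⟩)
    (by
      intro K hK1 hK2
      exact gad_cut G m G.IsBridge (fun _ => Iff.rfl) hm hreg K hK1
        (fun d hd hdK => hK2 _ hdK ⟨d, rfl, hd⟩))
  rw [Subgraph.isPerfectMatching_iff] at hM
  have huniq : ∀ a b c, M.Adj a b → M.Adj a c → b = c := fun a b c h1 h2 =>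
    (hM a).unique h1 h2
  let s : Finset G.Dart := univ.filter (fun d => ∀ p, ¬ M.Adj (Sum.inl d) (Sum.inr p))
  have hs : ∀ d, d ∈ s ↔ ∀ p, ¬ M.Adj (Sum.inl d) (Sum.inr p) := by simp [s]
  refine ⟨s, ?_, ?_⟩
  · intro v
    have hcore : ∀ i : Fin m, ∃ d : G.Dart, d.fst = v ∧ M.Adj (Sum.inl d) (Sum.inr (v, i)) := by
      intro i
      obtain ⟨b, hb, -⟩ := hM (Sum.inr (v, i))
      have h2 := M.adj_sub hb
      rcases b with d | p
      · exact ⟨d, h2, hb.symm⟩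
      · exact absurd h2 (by intro h; exact h)
    choose q hq1 hq2 using hcore
    have hqinj : Function.Injective q := by
      intro i j h
      have h1 := hq2 i
      rw [h] at h1
      have := huniq _ _ _ h1 (hq2 j)
      simpa using this
    have h1 : (univ.filter (fun d : G.Dart => d.fst = v)) = s.filter (fun d => d.fst = v) ∪ univ.image q := by
      ext d
      simp only [mem_filter, mem_univ, true_and, mem_union, mem_image]
      constructor
      · intro h
        by_cases hd : d ∈ s
        · exact Or.inl ⟨hd, h⟩
        · right
          rw [hs] at hd
          push Not at hd
          obtain ⟨⟨w, i⟩, hp⟩ := hd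
          have h2 : d.fst = w := M.adj_sub hp
          rw [h] at h2
          subst h2
          refine ⟨i, ?_⟩
          have := huniq _ _ _ hp.symm (hq2 i).symm
          simpa using this.symm
      · rintro (h | ⟨i, rfl⟩)
        · exact h.2
        · exact hq1 i
    have h2 : Disjoint (s.filter (fun d => d.fst = v)) (univ.image q) := by
      rw [Finset.disjoint_left]
      intro d hd hd'
      simp only [mem_filter, mem_image, mem_univ, true_and] at hd hd'
      obtain ⟨i, rfl⟩ := hd'
      exact (hs _).1 hd.1 _ (hq2 i)
    have h3 := G.dart_fst_fiber_card_eq_degree v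
    rw [h1, Finset.card_union_of_disjoint h2, hreg v, Finset.card_image_of_injective _ hqinj] at h3
    simp at h3
    omega
  · have key : ∀ d : G.Dart, ¬ G.IsBridge d.edge → d ∈ s → d.symm ∈ s := by
      intro d hd hds
      obtain ⟨b, hb, -⟩ := hM (Sum.inl d)
      have h2 := M.adj_sub hb
      rcases b with d' | p
      · rcases h2 with ⟨rfl, -⟩ | h
        · rw [hs]
          intro p hp
          have := huniq _ _ _ hp hb.symm
          simp at this
        · exact absurd h.2.1 hd
      · exact absurd hb ((hs d).1 hds p)
    intro d hd
    refine ⟨key d hd, fun h => ?_⟩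
    have := key d.symm (by simpa using hd) h
    simpa using this

lemma color_group (ρ : G.Dart → G.Dart) (hρ : Function.Involutive ρ) (n : ℕ) (s : Finset G.Dart)
    (hs : ∀ d ∈ s, ρ d ∈ s) (hn : ∀ v, #(s.filter (fun d => d.fst = v)) = n) :
    ∃ c : G.Dart → ℕ, (∀ d ∈ s, c d < n) ∧ ∀ (γ : ℕ → ℤ) (v : V),
      ∑ d ∈ s with d.fst = v, (γ (c d) + γ (c (ρ d))) = 2 * ∑ i ∈ range n, γ i := by
  classical
  obtain ⟨c, hc, hc2⟩ := color_lemma (fun d : G.Dart => d.fst) (fun d => (ρ d).fst) n s hn (by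
    intro v
    rw [← hn v]
    apply Finset.card_bij' (fun d _ => ρ d) (fun d _ => ρ d)
    · intro d hd; simp only [mem_filter] at hd ⊢; exact ⟨hs d hd.1, hd.2⟩
    · intro d hd; simp only [mem_filter] at hd ⊢; exact ⟨hs d hd.1, by rw [hρ d]; exact hd.2⟩
    · intro d _; exact hρ d
    · intro d _; exact hρ d)
  refine ⟨c, hc, ?_⟩
  intro γ v
  rw [Finset.sum_add_distrib, (hc2 γ v).1, two_mul]
  congr 1
  rw [← (hc2 γ v).2]
  apply Finset.sum_bij' (fun d _ => ρ d) (fun d _ => ρ d)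
  · intro d hd; simp only [mem_filter] at hd ⊢; exact ⟨hs d hd.1, by rw [hρ d]; exact hd.2⟩
  · intro d hd; simp only [mem_filter] at hd ⊢; exact ⟨hs d hd.1, hd.2⟩
  · intro d _; exact hρ d
  · intro d _; exact hρ d
  · intro d _; rfl

/-- flow with cut edges `S` -/
def ValidF (S : Finset (Sym2 V)) (g : V → V → ℤ) : Prop :=
  (∀ x y, G.Adj x y → g x y ≠ 0 ∧ |g x y| ≤ 4) ∧
  (∀ x y, G.Adj x y → s(x, y) ∉ S → g x y = g y x) ∧
  (∀ x y, G.Adj x y → s(x, y) ∈ S → |g x y| = 2 ∨ |g x y| = 4) ∧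
  (∀ x, ∑ y ∈ G.neighborFinset x, g x y = 0)

lemma dart_sum (gd : G.Dart → ℤ) (x : V) :
    ∑ y ∈ G.neighborFinset x, (if h : G.Adj x y then gd ⟨(x, y), h⟩ else 0) =
      ∑ d : G.Dart with d.fst = x, gd d := by
  symm
  apply Finset.sum_bij (fun d _ => d.snd)
  · intro d hd
    simp only [mem_filter, mem_univ, true_and] at hd
    rw [mem_neighborFinset, ← hd]; exact d.adj
  · intro d hd d' hd' h
    simp only [mem_filter, mem_univ, true_and] at hd hd'
    apply Dart.ext
    exact Prod.ext (hd.trans hd'.symm) h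
  · intro y hy
    rw [mem_neighborFinset] at hy
    exact ⟨⟨(x, y), hy⟩, by simp, rfl⟩
  · intro d hd
    simp only [mem_filter, mem_univ, true_and] at hd
    subst hd
    rw [dif_pos d.adj]

lemma goodW_pair (γ : ℕ → ℤ) (h : GoodW γ) (i j : ℕ) : γ i + γ j ≠ 0 ∧ |γ i + γ j| ≤ 4 := by
  refine ⟨h.2 i j, ?_⟩
  have h1 := h.1 i
  have h2 := h.1 j
  have := abs_add_le (γ i) (γ j)
  omega

lemma base_flow (m : ℕ) (hm : 2 ≤ m) (hm3 : m ≠ 3) (hreg : G.IsRegularOfDegree (m + 2))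
    (S : Finset (Sym2 V)) (hS : ∀ x y, G.Adj x y → (s(x, y) ∈ S ↔ G.IsBridge s(x, y)))
    (x0 y0 : V) (μ : ℤ) (hμ : μ = 2 ∨ μ = 4) :
    ∃ g, ValidF G S g ∧ (G.Adj x0 y0 → s(x0, y0) ∈ S → |g x0 y0| = μ) := by
  classical
  obtain ⟨s, hs1, hs2⟩ := exists_half_factor G m (by omega) hreg
  let ρ : G.Dart → G.Dart := fun d => if G.IsBridge d.edge then d else d.symm
  have hρb : ∀ d : G.Dart, G.IsBridge d.edge → ρ d = d := fun d hd => if_pos hd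
  have hρn : ∀ d : G.Dart, ¬ G.IsBridge d.edge → ρ d = d.symm := fun d hd => if_neg hd
  have hρ : Function.Involutive ρ := by
    intro d
    by_cases h : G.IsBridge d.edge
    · rw [hρb d h, hρb d h]
    · rw [hρn d h, hρn d.symm (by simpa using h), Dart.symm_symm]
  have hsρ : ∀ d, d ∈ s ↔ ρ d ∈ s := by
    intro d
    by_cases h : G.IsBridge d.edge
    · rw [hρb d h]
    · rw [hρn d h]; exact hs2 d h
  have hcompl : ∀ v, #(sᶜ.filter (fun d => d.fst = v)) = m := by
    intro v
    have h1 : (univ.filter (fun d : G.Dart => d.fst = v)) = s.filter (fun d => d.fst = v) ∪ sᶜ.filter (fun d => d.fst = v) := by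
      ext d; simp; tauto
    have h2 : Disjoint (s.filter (fun d => d.fst = v)) (sᶜ.filter (fun d => d.fst = v)) := by
      rw [Finset.disjoint_left]; intro d; simp; tauto
    have h3 := G.dart_fst_fiber_card_eq_degree v
    rw [h1, Finset.card_union_of_disjoint h2, hreg v, hs1 v] at h3
    omega
  obtain ⟨c1, hc1, hc1'⟩ := color_group G ρ hρ 2 s (fun d hd => (hsρ d).1 hd) hs1
  obtain ⟨c2, hc2, hc2'⟩ := color_group G ρ hρ m sᶜ (fun d hd => by
    rw [mem_compl, ← hsρ]; exact mem_compl.1 hd) hcompl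
  -- choose the weights
  have hw : ∃ α β : ℕ → ℤ, GoodW α ∧ GoodW β ∧
      (∀ h : G.Adj x0 y0, (⟨(x0, y0), h⟩ ∈ s → 2 * |β (c1 ⟨(x0, y0), h⟩)| = μ) ∧
        (⟨(x0, y0), h⟩ ∉ s → 2 * |α (c2 ⟨(x0, y0), h⟩)| = μ)) ∧
      ∑ i ∈ range m, α i + ∑ i ∈ range 2, β i = 0 := by
    obtain ⟨k, hk, hk2⟩ : ∃ k : ℤ, (k = 1 ∨ k = 2) ∧ 2 * k = μ := by
      rcases hμ with rfl | rfl
      · exact ⟨1, by simp, by simp⟩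
      · exact ⟨2, by simp, by simp⟩
    by_cases h : G.Adj x0 y0
    · by_cases hd : (⟨(x0, y0), h⟩ : G.Dart) ∈ s
      · obtain ⟨α, β, h1, h2, h3, h4, h5⟩ := weights m 0 (c1 ⟨(x0, y0), h⟩) k hm hm3 (by omega) (hc1 _ hd) hk
        refine ⟨α, β, h1, h2, fun _ => ⟨fun _ => by rw [h4, hk2], fun h' => absurd hd h'⟩, h5⟩
      · obtain ⟨α, β, h1, h2, h3, h4, h5⟩ := weights m (c2 ⟨(x0, y0), h⟩) 0 k hm hm3 (hc2 _ (mem_compl.2 hd)) (by omega) hk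
        refine ⟨α, β, h1, h2, fun _ => ⟨fun h' => absurd h' hd, fun _ => by rw [h3, hk2]⟩, h5⟩
    · obtain ⟨α, β, h1, h2, h3, h4, h5⟩ := weights m 0 0 k hm hm3 (by omega) (by omega) hk
      exact ⟨α, β, h1, h2, fun h' => absurd h' h, h5⟩
  obtain ⟨α, β, hα, hβ, hpre, hsum⟩ := hw
  let gd : G.Dart → ℤ := fun d => if d ∈ s then β (c1 d) + β (c1 (ρ d)) else α (c2 d) + α (c2 (ρ d))
  have hgs : ∀ d ∈ s, gd d = β (c1 d) + β (c1 (ρ d)) := fun d hd => if_pos hd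
  have hgn : ∀ d, d ∉ s → gd d = α (c2 d) + α (c2 (ρ d)) := fun d hd => if_neg hd
  let g : V → V → ℤ := fun x y => if h : G.Adj x y then gd ⟨(x, y), h⟩ else 0
  have hg : ∀ x y (h : G.Adj x y), g x y = gd ⟨(x, y), h⟩ := fun x y h => dif_pos h
  have hgood : ∀ d, gd d ≠ 0 ∧ |gd d| ≤ 4 := by
    intro d
    by_cases hd : d ∈ s
    · rw [hgs d hd]; exact goodW_pair β hβ _ _
    · rw [hgn d hd]; exact goodW_pair α hα _ _
  have hbr : ∀ d : G.Dart, G.IsBridge d.edge → (d ∈ s → |gd d| = 2 * |β (c1 d)|) ∧ (d ∉ s → |gd d| = 2 * |α (c2 d)|) := by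
    intro d hd
    constructor
    · intro h; rw [hgs d h, hρb d hd, ← two_mul, abs_mul]; simp
    · intro h; rw [hgn d h, hρb d hd, ← two_mul, abs_mul]; simp
  refine ⟨g, ⟨?_, ?_, ?_, ?_⟩, ?_⟩
  · intro x y h; rw [hg x y h]; exact hgood _
  · intro x y h hS'
    rw [hS x y h] at hS'
    rw [hg x y h, hg y x h.symm]
    have e : (⟨(y, x), h.symm⟩ : G.Dart) = ρ ⟨(x, y), h⟩ := by
      rw [hρn ⟨(x, y), h⟩ hS']; rfl
    rw [e]
    generalize (⟨(x, y), h⟩ : G.Dart) = d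
    by_cases hd : d ∈ s
    · rw [hgs d hd, hgs _ ((hsρ d).1 hd), hρ d, add_comm]
    · rw [hgn d hd, hgn _ (fun h' => hd ((hsρ d).2 h')), hρ d, add_comm]
  · intro x y h hS'
    rw [hS x y h] at hS'
    rw [hg x y h]
    have hb := hbr ⟨(x, y), h⟩ hS'
    by_cases hd : (⟨(x, y), h⟩ : G.Dart) ∈ s
    · rw [hb.1 hd]; have := hβ.1 (c1 ⟨(x, y), h⟩); omega
    · rw [hb.2 hd]; have := hα.1 (c2 ⟨(x, y), h⟩); omega
  · intro x
    have h1 : ∑ y ∈ G.neighborFinset x, g x y = ∑ d : G.Dart with d.fst = x, gd d := dart_sum G gd x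
    rw [h1]
    have h2 : (univ.filter (fun d : G.Dart => d.fst = x)) = s.filter (fun d => d.fst = x) ∪ sᶜ.filter (fun d => d.fst = x) := by
      ext d; simp; tauto
    have h3 : Disjoint (s.filter (fun d => d.fst = x)) (sᶜ.filter (fun d => d.fst = x)) := by
      rw [Finset.disjoint_left]; intro d; simp; tauto
    rw [h2, Finset.sum_union h3, Finset.sum_congr rfl (g := fun d => β (c1 d) + β (c1 (ρ d))),
      hc1' β x, Finset.sum_congr (s₁ := sᶜ.filter (fun d => d.fst = x)) rfl (g := fun d => α (c2 d) + α (c2 (ρ d))), hc2' α x]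
    · omega
    · intro d hd; exact hgn d (by simp at hd; exact hd.1)
    · intro d hd; exact hgs d (by simp at hd; exact hd.1)
  · intro h hS'
    rw [hS x0 y0 h] at hS'
    rw [hg x0 y0 h]
    have hb := hbr ⟨(x0, y0), h⟩ hS'
    by_cases hd : (⟨(x0, y0), h⟩ : G.Dart) ∈ s
    · rw [hb.1 hd, (hpre h).1 hd]
    · rw [hb.2 hd, (hpre h).2 hd]

/-- prescription property -/
def PresF (S : Finset (Sym2 V)) : Prop :=
  ∀ (x0 y0 : V) (μ : ℤ), (μ = 2 ∨ μ = 4) →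
    ∃ g, ValidF G S g ∧ (G.Adj x0 y0 → s(x0, y0) ∈ S → |g x0 y0| = μ)

lemma glue_step (S : Finset (Sym2 V)) (u v : V) (huv : G.Adj u v) (hP : PresF G (insert s(u, v) S))
    (X : V → Prop) (hu : X u) (hv : ¬ X v)
    (hcr : ∀ x y, G.Adj x y → s(x, y) ≠ s(u, v) → (X x ↔ X y)) (heS : s(u, v) ∉ S)
    (x0 y0 : V) (hx0 : X x0) (μ : ℤ) (hμ : μ = 2 ∨ μ = 4) :
    ∃ g, ValidF G S g ∧ (G.Adj x0 y0 → s(x0, y0) ∈ S → |g x0 y0| = μ) := by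
  classical
  obtain ⟨g1, ⟨a1, a2, a3, a4⟩, a5⟩ := hP x0 y0 μ hμ
  obtain ⟨g2, ⟨b1, b2, b3, b4⟩, b5⟩ := hP v u |g1 u v| (a3 u v huv (by simp))
  have hab := b5 huv.symm (by rw [Sym2.eq_swap]; simp)
  obtain ⟨ε, hε, hε2⟩ : ∃ ε : ℤ, (ε = 1 ∨ ε = -1) ∧ g1 u v = ε * g2 v u := by
    rcases abs_eq_abs.1 hab with h | h
    · exact ⟨1, by simp, by rw [h]; ring⟩
    · exact ⟨-1, by simp, by rw [h]; ring⟩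
  have hεa : ∀ z, |ε * z| = |z| := by
    intro z; rw [abs_mul]; rcases hε with rfl | rfl <;> simp
  refine ⟨fun x y => if X x then g1 x y else ε * g2 x y, ⟨?_, ?_, ?_, ?_⟩, ?_⟩
  · intro x y h
    by_cases hx : X x
    · simpa only [hx, if_true] using a1 x y h
    · simp only [hx, if_false]
      refine ⟨?_, by rw [hεa]; exact (b1 x y h).2⟩
      have := (b1 x y h).1
      rcases hε with rfl | rfl <;> simpa using this
  · intro x y h hS
    by_cases he : s(x, y) = s(u, v)
    · rw [Sym2.eq_iff] at he
      rcases he with ⟨rfl, rfl⟩ | ⟨rfl, rfl⟩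
      · simp only [hu, hv, if_true, if_false]; exact hε2
      · simp only [hu, hv, if_true, if_false]; exact hε2.symm
    · have hS' : s(x, y) ∉ insert s(u, v) S := by
        rw [Finset.mem_insert]; tauto
      have hc := hcr x y h he
      by_cases hx : X x
      · have hy := hc.1 hx
        simp only [hx, hy, if_true]; exact a2 x y h hS'
      · have hy : ¬ X y := fun h => hx (hc.2 h)
        simp only [hx, hy, if_false]; rw [b2 x y h hS']
  · intro x y h hS
    have hS' : s(x, y) ∈ insert s(u, v) S := Finset.mem_insert_of_mem hS
    by_cases hx : X x
    · simpa only [hx, if_true] using a3 x y h hS'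
    · simp only [hx, if_false]; rw [hεa]; exact b3 x y h hS'
  · intro x
    by_cases hx : X x
    · simpa only [hx, if_true] using a4 x
    · simp only [hx, if_false]; rw [← Finset.mul_sum, b4 x, mul_zero]
  · intro h hS
    simp only [hx0, if_true]
    exact a5 h (Finset.mem_insert_of_mem hS)

lemma glue_all (S : Finset (Sym2 V)) : (∀ e ∈ S, e ∈ G.edgeSet ∧ G.IsBridge e) → PresF G S → PresF G ∅ := by
  classical
  induction S using Finset.induction_on with
  | empty => intro _ h; exact h
  | insert e S he ih =>
    intro hS hP
    apply ih (fun e' he' => hS e' (Finset.mem_insert_of_mem he'))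
    have hbr := hS e (Finset.mem_insert_self _ _)
    induction e using Sym2.ind with
    | _ u v =>
    obtain ⟨hadj, hb⟩ := hbr
    rw [mem_edgeSet] at hadj
    rw [isBridge_iff] at hb
    let X : V → Prop := fun x => (G.deleteEdges {s(u, v)}).Reachable u x
    have hu : X u := Reachable.refl _
    have hv : ¬ X v := hb
    have hcr : ∀ x y, G.Adj x y → s(x, y) ≠ s(u, v) → (X x ↔ X y) := by
      intro x y h hne
      have h2 : (G.deleteEdges {s(u, v)}).Adj x y := by
        rw [deleteEdges_adj]; exact ⟨h, by simpa using hne⟩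
      exact ⟨fun h' => h'.trans h2.reachable, fun h' => h'.trans h2.symm.reachable⟩
    intro x0 y0 μ hμ
    by_cases hx0 : X x0
    · exact glue_step G S u v hadj hP X hu hv hcr he x0 y0 hx0 μ hμ
    · refine glue_step G S v u hadj.symm ?_ (fun x => ¬ X x) hv (not_not.2 hu) ?_ ?_ x0 y0 hx0 μ hμ
      · rw [Sym2.eq_swap]; exact hP
      · intro x y h hne
        rw [Sym2.eq_swap (a := v)] at hne
        exact not_congr (hcr x y h hne)
      · rw [Sym2.eq_swap]; exact he

lemma final_of_valid (g : V → V → ℤ) (h : ValidF G ∅ g) :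
    ∃ f : Sym2 V → ℤ,
      (∀ e ∈ G.edgeFinset, f e ≠ 0 ∧ (f e).natAbs ≤ 4) ∧
      (∀ v : V, ∑ e ∈ G.incidenceFinset v, f e = 0) := by
  classical
  obtain ⟨h1, h2, -, h4⟩ := h
  let f : Sym2 V → ℤ := Sym2.lift ⟨fun x y => if G.Adj x y then g x y else 0, by
    intro x y
    by_cases h : G.Adj x y
    · simp only [h, h.symm, if_true]; exact h2 x y h (by simp)
    · have h' : ¬ G.Adj y x := fun h' => h h'.symm
      simp only [h, h', if_false]⟩
  have hf : ∀ x y, G.Adj x y → f s(x, y) = g x y := by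
    intro x y h; simp [f, h]
  refine ⟨f, ?_, ?_⟩
  · intro e he
    induction e using Sym2.ind with
    | _ x y =>
    rw [mem_edgeFinset, mem_edgeSet] at he
    rw [hf x y he]
    have := h1 x y he
    refine ⟨this.1, ?_⟩
    have := this.2
    have := abs_le.1 this
    omega
  · intro v
    rw [← h4 v]
    symm
    apply Finset.sum_bij (fun y _ => s(v, y))
    · intro y hy
      rw [mem_neighborFinset] at hy
      rw [mem_incidenceFinset, mk'_mem_incidenceSet_left_iff]; exact hy
    · intro y _ y' _ h
      exact Sym2.congr_right.1 h
    · intro e he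
      rw [mem_incidenceFinset] at he
      obtain ⟨he1, he2⟩ := he
      obtain ⟨y, rfl⟩ := Sym2.mem_iff_exists.1 he2
      exact ⟨y, by rw [mem_neighborFinset]; exact he1, rfl⟩
    · intro y hy
      rw [mem_neighborFinset] at hy
      rw [hf v y hy]

lemma flow_three (hreg : G.IsRegularOfDegree 3) : ∃ g, ValidF G ∅ g := by
  classical
  obtain ⟨c, hc, hc'⟩ := color_group G Dart.symm Dart.symm_involutive 3 univ (fun d _ => mem_univ _)
    (fun v => by rw [G.dart_fst_fiber_card_eq_degree, hreg v])
  obtain ⟨α, hα, -, hα2⟩ := weights_aux 3 1 0 1 (by omega) (by omega) (by omega) (by simp)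
  have hα1 := goodW_of α hα
  let gd : G.Dart → ℤ := fun d => α (c d) + α (c d.symm)
  let g : V → V → ℤ := fun x y => if h : G.Adj x y then gd ⟨(x, y), h⟩ else 0
  have hg : ∀ x y (h : G.Adj x y), g x y = gd ⟨(x, y), h⟩ := fun x y h => dif_pos h
  refine ⟨g, ?_, ?_, ?_, ?_⟩
  · intro x y h; rw [hg x y h]; exact goodW_pair α hα1 _ _
  · intro x y h _
    rw [hg x y h, hg y x h.symm]
    exact add_comm _ _
  · intro x y h h'; simp at h'
  · intro x
    have h1 : ∑ y ∈ G.neighborFinset x, g x y = ∑ d : G.Dart with d.fst = x, gd d := dart_sum G gd x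
    rw [h1, hc' α x, hα2]; norm_num

end

/-- Let `r ≥ 3` with `r ≠ 5`. Then every `r`-regular graph admits a zero-sum 5-flow. -/
theorem stmt_4 {V : Type*} [Fintype V] [DecidableEq V] (G : SimpleGraph V)
    [DecidableRel G.Adj] (r : ℕ) (hr : 3 ≤ r) (hr5 : r ≠ 5)
    (hreg : G.IsRegularOfDegree r) :
    ∃ f : Sym2 V → ℤ,
      (∀ e ∈ G.edgeFinset, f e ≠ 0 ∧ (f e).natAbs ≤ 4) ∧
      (∀ v : V, ∑ e ∈ G.incidenceFinset v, f e = 0) := by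
  classical
  by_cases h3 : r = 3
  · subst h3
    obtain ⟨g, hg⟩ := flow_three G hreg
    exact final_of_valid G g hg
  · rcases isEmpty_or_nonempty V with hV | ⟨⟨x⟩⟩
    · exact ⟨fun _ => 1, fun e _ => by simp, fun v => hV.elim v⟩
    obtain ⟨m, rfl⟩ : ∃ m, r = m + 2 := ⟨r - 2, by omega⟩
    have hP : PresF G (G.edgeFinset.filter G.IsBridge) := by
      intro x0 y0 μ hμ
      apply base_flow G m (by omega) (by omega) hreg _ _ x0 y0 μ hμ
      intro x y h
      simp [h]
    have := glue_all G _ (by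
      intro e he
      simpa using he) hP
    obtain ⟨g, hg, -⟩ := this x x 2 (Or.inl rfl)
    exact final_of_valid G g hg
end
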